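/- arXiv:2002.03155 — 2 statements merged into one kernel-verified Lean document; each statement's English description precedes it below -/
import Mathlib

section
/- Fix an integer Δ ≥ 2. For all ε > 0 and δ > 0 there exist a positive integer t and a real p > 0 such that for every probability distribution μ on a finite linearly ordered set D with μ({x}) ≤ p for all x ∈ D, and every finite connected simple graph G = (V,E) with maximum degree at most Δ and at least one edge, the following algorithm always outputs a matching M of G and, with probability at least 1 − δ, this matching satisfies |M| ≥ ν(G)/(1+ε): (1) sample labels (r_v)_{v∈V} i.i.d. from μ; (2) set F = {{u,v} ∈ E : there exist distinct s,t' ∈ N_t(u) ∪ N_t(v) with r_s = r_{t'}}; (3) initialize M = ∅ and, for k = 1, 2, …, t, do: set A = ∅; enumerate all simple paths P = (v_1, …, v_{k+1}) of length k in G in increasing lexicographic order of the label sequence (r_{v_1}, …, r_{v_{k+1}}) (further ties broken by a fixed order); whenever P contains no edge of F, P is an M-augmenting path, and P shares no vertex with any path whose edges were already placed in A, add all edges of P to A; finally replace M by the symmetric difference M ⊕ A. -/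
/-!
Fix the labels `r` and let `H` be `G` with the forbidden edges `F` deleted. The algorithm runs the
phases of Hopcroft and Karp in `H`; the labels influence only the order in which paths are tried,
and nothing depends on that order.

*Long augmenting paths.* For matchings `M, N` of `H` such that every `M`-augmenting path has at
least `k` edges, `|M ⊕ N| ≥ k (|N| - |M|)` (`card_le_of_long_aug`). Matchings are viewed as
involutions of the vertex set (`mate`), and the components of `M ⊕ N` are followed by alternating
the two involutions from a vertex exposed by `M`. The orbits that do not stop at a vertex exposed
by `N` are augmenting paths, and they use pairwise distinct directed edges (`involution_count`).

*Phases.* The phase `k` collects a maximal vertex-disjoint family `A` of `M`-augmenting paths of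
length `k`. The bound above, applied to `M` and to `(M ⊕ A) ⊕ P`, excludes augmenting paths `P` of
length at most `k` for `M ⊕ A` (`noShortAug_step`). After `t` phases no augmenting path of length
at most `t` remains, so the same bound, applied to a maximum matching of `G` without its edges in
`F`, gives `t ν(G) ≤ (t + 2) |M| + t |F|` (`approx_of_noShortAug`).

*Forbidden edges.* An edge is in `F` only if two of the at most `2 (Δ + 1) ^ t` vertices near it
receive the same label, and two given vertices do so with probability at most `p`. Hence the
expected size of `F` is at most a constant times `p |E|`, while `|E| ≤ 2 Δ ν(G)`
(`card_edges_le`). By Markov's inequality, `|F|` is a small fraction of `ν(G)` with probability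
at least `1 - δ` once `p` is small.
-/

/-- `N_L(v)`: the set of vertices at graph distance at most `L` from `v`
(including `v` itself). -/
def ballSet {V : Type} (G : SimpleGraph V) (v : V) (L : ℕ) : Set V :=
  {u | G.edist v u ≤ (L : ℕ∞)}

/-- A matching of a graph `G`: a set `M` of edges of `G`, no two of which share a vertex. -/
def IsMatchingSet {V : Type} (G : SimpleGraph V) (M : Set (Sym2 V)) : Prop :=
  M ⊆ G.edgeSet ∧ ∀ e ∈ M, ∀ f ∈ M, e ≠ f → ∀ v : V, ¬(v ∈ e ∧ v ∈ f)

/-- `ν(G)`: the maximum cardinality of a matching of the finite graph `G`. -/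
noncomputable def matchingNumber {V : Type} [Fintype V] (G : SimpleGraph V) : ℕ :=
  sSup {n : ℕ | ∃ M : Set (Sym2 V), IsMatchingSet G M ∧ M.ncard = n}

open Classical in
/-- The probability, when labels `r : V → D` are sampled i.i.d. from the distribution `μ`
on the finite set `D` (joint law the product measure `μ^V`), that the predicate `P`
holds of the labeling. -/
noncomputable def probOf {V D : Type} [Fintype V] [Fintype D]
    (μ : D → ℝ) (P : (V → D) → Prop) : ℝ :=
  ∑ r ∈ Finset.univ.filter P, ∏ v, μ (r v)

/-- A vertex is `M`-exposed if it is not an endpoint of any edge of `M`. -/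
def Exposed {V : Type} (M : Finset (Sym2 V)) (v : V) : Prop :=
  ∀ e ∈ M, v ∉ e

open Classical in
/-- The edges of the vertex sequence `q = (v_1, …, v_{k+1})`. -/
noncomputable def seqEdges {V : Type} {k : ℕ} (q : Fin (k + 1) → V) :
    Finset (Sym2 V) :=
  (Finset.univ : Finset (Fin k)).image (fun i => s(q i.castSucc, q i.succ))

/-- `q = (v_1, …, v_{k+1})` is a simple path of length `k` in `G`. -/
def IsPathSeq {V : Type} {k : ℕ} (G : SimpleGraph V) (q : Fin (k + 1) → V) : Prop :=
  Function.Injective q ∧ ∀ i : Fin k, G.Adj (q i.castSucc) (q i.succ)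

/-- The simple path `q` is `M`-augmenting: both endpoints are `M`-exposed and the edges
alternate between `E \ M` and `M` (the `i`-th edge is in `M` iff `i` is odd, counting
from `0`). -/
def IsAugSeq {V : Type} {k : ℕ} (M : Finset (Sym2 V)) (q : Fin (k + 1) → V) : Prop :=
  Exposed M (q 0) ∧ Exposed M (q (Fin.last k)) ∧
    ∀ i : Fin k, (s(q i.castSucc, q i.succ) ∈ M ↔ (i : ℕ) % 2 = 1)

/-- The path `q` shares a vertex with some path whose edges were already placed in `A`. -/
def SeqTouches {V : Type} {k : ℕ} (A : Finset (Sym2 V)) (q : Fin (k + 1) → V) : Prop :=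
  ∃ i, ∃ e ∈ A, q i ∈ e

open Classical in
/-- Processing one candidate path `q`: if `q` is a simple path containing no edge of `F`,
is an `M`-augmenting path, and shares no vertex with the paths already collected in `A`,
then all edges of `q` are added to `A`. -/
noncomputable def pathStep {V : Type} {k : ℕ} (G : SimpleGraph V)
    (M F : Finset (Sym2 V)) (A : Finset (Sym2 V)) (q : Fin (k + 1) → V) :
    Finset (Sym2 V) :=
  if IsPathSeq G q ∧ (∀ e ∈ seqEdges q, e ∉ F) ∧ IsAugSeq M q ∧ ¬ SeqTouches A q
  then A ∪ seqEdges q else A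

open Classical in
/-- All vertex sequences of length `k+1`, listed in increasing lexicographic order of
their label sequences `(r_{v_1}, …, r_{v_{k+1}})`, further ties broken by the fixed
linear order on `V` (lexicographically on the vertex sequence). -/
noncomputable def sortedSeqs {V D : Type} [Fintype V] [LinearOrder V] [LinearOrder D]
    (r : V → D) (k : ℕ) : List (Fin (k + 1) → V) :=
  (Finset.univ : Finset (Fin (k + 1) → V)).toList.mergeSort
    (fun a b => decide (toLex (List.ofFn (fun i => r (a i)), List.ofFn a) ≤
      toLex (List.ofFn (fun i => r (b i)), List.ofFn b)))

/-- One phase (for paths of length `k`): enumerate all simple paths of length `k` in the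
prescribed order and greedily collect a set `A` of vertex-disjoint `M`-augmenting paths
avoiding `F`. -/
noncomputable def phase {V D : Type} [Fintype V] [LinearOrder V] [LinearOrder D]
    (G : SimpleGraph V) (M F : Finset (Sym2 V)) (r : V → D) (k : ℕ) :
    Finset (Sym2 V) :=
  (sortedSeqs r k).foldl (pathStep G M F) ∅

open Classical in
/-- The matching after the phases `k = 1, 2, …`: starting from `M = ∅`, each phase
replaces `M` by the symmetric difference `M ⊕ A` with the collected augmenting paths. -/
noncomputable def algMatch {V D : Type} [Fintype V] [LinearOrder V] [LinearOrder D]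
    (G : SimpleGraph V) (F : Finset (Sym2 V)) (r : V → D) : ℕ → Finset (Sym2 V)
  | 0 => ∅
  | (k + 1) =>
      let M := algMatch G F r k
      let A := phase G M F r (k + 1)
      (M \ A) ∪ (A \ M)

open Classical in
/-- The forbidden edge set
`F = {{u,w} ∈ E | ∃ distinct s, t ∈ N_t(u) ∪ N_t(w), r s = r t}`. -/
noncomputable def forbiddenEdges {V D : Type} [Fintype V] (G : SimpleGraph V)
    (r : V → D) (t : ℕ) : Finset (Sym2 V) :=
  Finset.univ.filter (fun e : Sym2 V => e ∈ G.edgeSet ∧ ∃ u w : V, e = s(u, w) ∧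
    ∃ a ∈ ballSet G u t ∪ ballSet G w t, ∃ b ∈ ballSet G u t ∪ ballSet G w t,
      a ≠ b ∧ r a = r b)

/-! ### Alternating orbits of two involutions -/

/-- The alternating orbit `v, n v, m (n v), n (m (n v)), …` of two maps `m, n`, the map `n`
being applied first. -/
def altSeq {V : Type} (m n : V → V) (v : V) : ℕ → V
  | 0 => v
  | i + 1 => if i % 2 = 0 then n (altSeq m n v i) else m (altSeq m n v i)

/-- The orbit moves at each of its first `l` steps. -/
def MovesTo {V : Type} (m n : V → V) (v : V) (l : ℕ) : Prop :=
  ∀ i < l, altSeq m n v i ≠ altSeq m n v (i + 1)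

lemma altSeq_succ_even {V : Type} (m n : V → V) (v : V) {i : ℕ} (h : i % 2 = 0) :
    altSeq m n v (i + 1) = n (altSeq m n v i) := by simp [altSeq, h]

lemma altSeq_succ_odd {V : Type} (m n : V → V) (v : V) {i : ℕ} (h : i % 2 = 1) :
    altSeq m n v (i + 1) = m (altSeq m n v i) := by simp [altSeq, h]

section orbits
variable {V : Type} {m n : V → V}

/-- Walking two orbits backwards in parallel: orbits of `m`-fixed points can only meet, at
positions of equal parity, if they are the same orbit at the same position. -/
lemma altSeq_inj_of_parity (hm : ∀ x, m (m x) = x) (hn : ∀ x, n (n x) = x) {v v' : V}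
    (hv : m v = v) (hv' : m v' = v') :
    ∀ i j : ℕ, i % 2 = j % 2 → MovesTo m n v i → MovesTo m n v' j →
      altSeq m n v i = altSeq m n v' j → v = v' ∧ i = j := by
  have key : ∀ (u u' : V), m u = u → ∀ j, (j + 1) % 2 = 0 → MovesTo m n u' (j + 1) →
      u ≠ altSeq m n u' (j + 1) := by
    intro u u' hu j hj hmv he
    apply hmv j (by omega)
    rw [altSeq_succ_odd m n u' (by omega)] at he ⊢
    have := congrArg m he
    rw [hm, hu] at this
    rw [← he, ← this]
  intro i
  induction i with
  | zero =>
    intro j hp h1 h2 he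
    cases j with
    | zero => exact ⟨he, rfl⟩
    | succ j => exact absurd he (key v v' hv j (by omega) h2)
  | succ i ih =>
    intro j hp h1 h2 he
    cases j with
    | zero => exact absurd he.symm (key v' v hv' i (by omega) h1)
    | succ j =>
      have : altSeq m n v i = altSeq m n v' j := by
        rcases Nat.mod_two_eq_zero_or_one i with h | h
        · rw [altSeq_succ_even m n v h, altSeq_succ_even m n v' (by omega)] at he
          rw [← hn (altSeq m n v i), he, hn]
        · rw [altSeq_succ_odd m n v h, altSeq_succ_odd m n v' (by omega)] at he
          rw [← hm (altSeq m n v i), he, hm]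
      obtain ⟨h3, h4⟩ := ih j (by omega) (fun a ha => h1 a (by omega))
        (fun a ha => h2 a (by omega)) this
      exact ⟨h3, by omega⟩

/-- Two positions of different parity with the same value would force the orbit to be
stationary halfway between them. -/
lemma altSeq_ne_of_parity (hm : ∀ x, m (m x) = x) (hn : ∀ x, n (n x) = x) {v : V} :
    ∀ d i : ℕ, MovesTo m n v (i + (2 * d + 1)) →
      altSeq m n v i ≠ altSeq m n v (i + (2 * d + 1)) := by
  intro d
  induction d with
  | zero => intro i h; exact h i (by omega)
  | succ d ih =>
    intro i h he
    apply ih (i + 1) (fun a ha => h a (by omega))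
    have e1 : i + (2 * (d + 1) + 1) = (i + 1 + (2 * d + 1)) + 1 := by ring
    rw [e1] at he
    rcases Nat.mod_two_eq_zero_or_one i with h' | h'
    · rw [altSeq_succ_even m n v (i := i + 1 + (2 * d + 1)) (by omega)] at he
      rw [altSeq_succ_even m n v h', he, hn]
    · rw [altSeq_succ_odd m n v (i := i + 1 + (2 * d + 1)) (by omega)] at he
      rw [altSeq_succ_odd m n v h', he, hm]

lemma altSeq_injOn (hm : ∀ x, m (m x) = x) (hn : ∀ x, n (n x) = x) {v : V}
    (hv : m v = v) {l : ℕ} (h : MovesTo m n v l) {i j : ℕ} (hi : i ≤ l) (hj : j ≤ l)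
    (he : altSeq m n v i = altSeq m n v j) : i = j := by
  by_cases hp : i % 2 = j % 2
  · exact (altSeq_inj_of_parity hm hn hv hv i j hp (fun a ha => h a (by omega))
      (fun a ha => h a (by omega)) he).2
  · exfalso
    rcases lt_or_gt_of_ne (show i ≠ j by rintro rfl; exact hp rfl) with hlt | hlt
    · obtain ⟨d, rfl⟩ : ∃ d, j = i + (2 * d + 1) := ⟨(j - i) / 2, by omega⟩
      exact altSeq_ne_of_parity hm hn d i (fun a ha => h a (by omega)) he
    · obtain ⟨d, rfl⟩ : ∃ d, i = j + (2 * d + 1) := ⟨(i - j) / 2, by omega⟩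
      exact altSeq_ne_of_parity hm hn d j (fun a ha => h a (by omega)) he.symm

/-- While the orbit of an `m`-fixed point moves, it never traverses a pair that is matched
by both involutions. -/
lemma altSeq_step_ne (hm : ∀ x, m (m x) = x) (hn : ∀ x, n (n x) = x) {v : V}
    (hv : m v = v) {l : ℕ} (h : MovesTo m n v l) {i : ℕ} (hi : i < l) :
    n (altSeq m n v i) ≠ m (altSeq m n v i) := by
  intro he
  have hnext : altSeq m n v (i + 1) = n (altSeq m n v i) := by
    rcases Nat.mod_two_eq_zero_or_one i with h' | h'
    · exact altSeq_succ_even m n v h'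
    · rw [he]; exact altSeq_succ_odd m n v h'
  cases i with
  | zero =>
    apply h 0 hi
    rw [hnext, he]; exact hv.symm
  | succ i =>
    have hprev : altSeq m n v i = n (altSeq m n v (i + 1)) := by
      rcases Nat.mod_two_eq_zero_or_one i with h' | h'
      · rw [altSeq_succ_even m n v h', hn]
      · rw [he, altSeq_succ_odd m n v h', hm]
    have := altSeq_injOn hm hn hv h (i := i) (j := i + 1 + 1) (by omega) (by omega)
      (hprev.trans hnext.symm)
    omega

lemma exists_stationary [Finite V] (hm : ∀ x, m (m x) = x) (hn : ∀ x, n (n x) = x) {v : V}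
    (hv : m v = v) : ∃ l, MovesTo m n v l ∧ altSeq m n v l = altSeq m n v (l + 1) := by
  classical
  have hex : ∃ l, altSeq m n v l = altSeq m n v (l + 1) := by
    by_contra! hcon
    apply not_injective_infinite_finite (altSeq m n v)
    intro i j hij
    exact altSeq_injOn hm hn hv (l := max i j) (fun a _ => hcon a) (le_max_left _ _)
      (le_max_right _ _) hij
  exact ⟨Nat.find hex, fun i hi => Nat.find_min hex hi, Nat.find_spec hex⟩

open Classical in
/-- The Hopcroft–Karp count for involutions. Every orbit of an `m`-fixed point stops at a
fixed point of `m` or of `n`; at most `|Fix n|` of them stop at a fixed point of `n`, and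
the others, all of length at least `k`, use pairwise distinct directed edges of the symmetric
difference. -/
lemma involution_count [Fintype V] (hm : ∀ x, m (m x) = x) (hn : ∀ x, n (n x) = x) (k : ℕ)
    (hk : ∀ v l, m v = v → MovesTo m n v l → l % 2 = 1 →
      m (altSeq m n v l) = altSeq m n v l → k ≤ l) :
    k * (Finset.univ.filter (fun x => m x = x)).card ≤
      k * (Finset.univ.filter (fun x => n x = x)).card +
      ((Finset.univ.filter (fun x => n x ≠ x ∧ n x ≠ m x)).card +
       (Finset.univ.filter (fun x => m x ≠ x ∧ n x ≠ m x)).card) := by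
  have hex : ∀ v, ∃ l, m v = v →
      MovesTo m n v l ∧ altSeq m n v l = altSeq m n v (l + 1) := by
    intro v
    by_cases hv : m v = v
    · obtain ⟨l, hl⟩ := exists_stationary hm hn hv
      exact ⟨l, fun _ => hl⟩
    · exact ⟨0, fun h => absurd h hv⟩
  choose s hs using hex
  set Fm := Finset.univ.filter (fun x => m x = x)
  have hsplit := Finset.card_filter_add_card_filter_not (s := Fm) (fun v => s v % 2 = 0)
  have h1 : (Fm.filter (fun v => s v % 2 = 0)).card ≤
      (Finset.univ.filter (fun x => n x = x)).card := by
    apply Finset.card_le_card_of_injOn (fun v => altSeq m n v (s v))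
    · intro v hv
      simp only [Fm, Finset.coe_filter, Finset.mem_filter, Finset.mem_univ, true_and,
        Set.mem_ofPred_eq] at hv ⊢
      have := (hs v hv.1).2
      rw [altSeq_succ_even m n v hv.2] at this
      exact this.symm
    · intro v hv v' hv' he
      simp only [Fm, Finset.coe_filter, Finset.mem_filter, Finset.mem_univ, true_and,
        Set.mem_ofPred_eq] at hv hv'
      exact (altSeq_inj_of_parity hm hn hv.1 hv'.1 _ _ (by omega) (hs v hv.1).1
        (hs v' hv'.1).1 he).1
  have h2 : ((Fm.filter (fun v => ¬ s v % 2 = 0)) ×ˢ Finset.range k).card ≤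
      ((Finset.univ.filter (fun x => n x ≠ x ∧ n x ≠ m x)).disjSum
       (Finset.univ.filter (fun x => m x ≠ x ∧ n x ≠ m x))).card := by
    have hks : ∀ v, m v = v → ¬ s v % 2 = 0 → k ≤ s v := by
      intro v hv ho
      have hstat := (hs v hv).2
      rw [altSeq_succ_odd m n v (by omega)] at hstat
      exact hk v (s v) hv (hs v hv).1 (by omega) hstat.symm
    apply Finset.card_le_card_of_injOn
      (fun a => if a.2 % 2 = 0 then Sum.inl (altSeq m n a.1 a.2)
        else Sum.inr (altSeq m n a.1 a.2))
    · rintro ⟨v, i⟩ hv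
      simp only [Fm, Finset.coe_product, Set.mem_prod, Finset.coe_filter, Finset.mem_filter,
        Finset.mem_univ, true_and, Set.mem_ofPred_eq, Finset.coe_range, Set.mem_Iio] at hv
      obtain ⟨⟨hv, ho⟩, hi⟩ := hv
      have hlt : i < s v := lt_of_lt_of_le hi (hks v hv ho)
      have hne := altSeq_step_ne hm hn hv (hs v hv).1 hlt
      have hmv := (hs v hv).1 i hlt
      by_cases hp : i % 2 = 0
      · rw [altSeq_succ_even m n v hp] at hmv
        simp [hp, hne, hmv.symm]
      · rw [altSeq_succ_odd m n v (by omega)] at hmv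
        simp [hp, hne, hmv.symm]
    · rintro ⟨v, i⟩ hv ⟨v', j⟩ hv' he
      simp only [Fm, Finset.coe_product, Set.mem_prod, Finset.coe_filter, Finset.mem_filter,
        Finset.mem_univ, true_and, Set.mem_ofPred_eq, Finset.coe_range, Set.mem_Iio] at hv hv'
      obtain ⟨⟨hv, ho⟩, hi⟩ := hv
      obtain ⟨⟨hv', ho'⟩, hj⟩ := hv'
      have hi' := hks v hv ho
      have hj' := hks v' hv' ho'
      have hcon : i % 2 = j % 2 ∧ altSeq m n v i = altSeq m n v' j := by
        by_cases hp : i % 2 = 0 <;> by_cases hq : j % 2 = 0 <;> simp [hp, hq] at he ⊢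
        · exact he
        · exact ⟨by omega, he⟩
      obtain ⟨e1, e2⟩ := altSeq_inj_of_parity hm hn hv hv' i j hcon.1
        (fun a ha => (hs v hv).1 a (by omega)) (fun a ha => (hs v' hv').1 a (by omega)) hcon.2
      rw [e1, e2]
  rw [Finset.card_product, Finset.card_range, Finset.card_disjSum, mul_comm] at h2
  rw [← hsplit, mul_add]
  exact add_le_add (Nat.mul_le_mul_left k h1) h2

end orbits

/-! ### Augmenting paths and the size of a matching -/

section matchings
open Classical
variable {V : Type}

/-- The vertices covered by a set of edges. -/
noncomputable def coveredBy (S : Finset (Sym2 V)) : Finset V := S.biUnion Sym2.toFinset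

lemma mem_coveredBy {S : Finset (Sym2 V)} {x : V} : x ∈ coveredBy S ↔ ∃ e ∈ S, x ∈ e := by
  simp [coveredBy]

lemma matching_unique {H : SimpleGraph V} {M : Finset (Sym2 V)}
    (hM : IsMatchingSet H (M : Set (Sym2 V))) {e f : Sym2 V} (he : e ∈ M) (hf : f ∈ M) {v : V}
    (hve : v ∈ e) (hvf : v ∈ f) : e = f := by
  by_contra h
  exact hM.2 e (by exact_mod_cast he) f (by exact_mod_cast hf) h v ⟨hve, hvf⟩

lemma matching_mono {H : SimpleGraph V} {M S : Finset (Sym2 V)}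
    (hM : IsMatchingSet H (M : Set (Sym2 V))) (hS : S ⊆ M) :
    IsMatchingSet H (S : Set (Sym2 V)) :=
  ⟨fun _ he => hM.1 (hS he), fun e he f hf h v => hM.2 e (hS he) f (hS hf) h v⟩

lemma card_coveredBy {H : SimpleGraph V} {M : Finset (Sym2 V)}
    (hM : IsMatchingSet H (M : Set (Sym2 V))) : (coveredBy M).card = 2 * M.card := by
  rw [coveredBy, Finset.card_biUnion, Finset.sum_congr rfl (g := fun _ => 2)]
  · simp [mul_comm]
  · intro e he
    exact Sym2.card_toFinset_of_not_isDiag e (H.not_isDiag_of_mem_edgeSet (hM.1 he))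
  · intro e he f hf hne
    rw [Function.onFun, Finset.disjoint_left]
    intro v hv hv'
    rw [Sym2.mem_toFinset] at hv hv'
    exact hne (matching_unique hM he hf hv hv')

/-- The vertex matched to `x` by `M`, and `x` itself if `x` is exposed. -/
noncomputable def mate (M : Finset (Sym2 V)) (x : V) : V :=
  if h : ∃ y, s(x, y) ∈ M then h.choose else x

lemma mate_mem {M : Finset (Sym2 V)} {x : V} (h : mate M x ≠ x) : s(x, mate M x) ∈ M := by
  unfold mate at h ⊢
  split_ifs with h'
  · exact h'.choose_spec
  · rw [dif_neg h'] at h; exact absurd rfl h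

section
variable {H : SimpleGraph V} {M : Finset (Sym2 V)}

lemma mate_eq (hM : IsMatchingSet H (M : Set (Sym2 V))) {x y : V} (h : s(x, y) ∈ M) :
    mate M x = y := by
  have h' : ∃ y, s(x, y) ∈ M := ⟨y, h⟩
  unfold mate
  rw [dif_pos h']
  have := matching_unique hM h'.choose_spec h (v := x) (by simp) (by simp)
  exact Sym2.congr_right.mp this

lemma ne_of_mem_matching (hM : IsMatchingSet H (M : Set (Sym2 V))) {x y : V}
    (h : s(x, y) ∈ M) : x ≠ y :=
  SimpleGraph.Adj.ne (G := H) (hM.1 (by exact_mod_cast h))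

lemma mate_mate (hM : IsMatchingSet H (M : Set (Sym2 V))) (x : V) :
    mate M (mate M x) = x := by
  by_cases h : mate M x = x
  · rw [h, h]
  · have := mate_mem h
    rw [Sym2.eq_swap] at this
    exact mate_eq hM this

lemma mate_eq_self_iff (hM : IsMatchingSet H (M : Set (Sym2 V))) {x : V} :
    mate M x = x ↔ Exposed M x := by
  constructor
  · intro h e he hx
    obtain ⟨y, rfl⟩ := hx
    have := mate_eq hM he
    exact ne_of_mem_matching hM he (h.symm.trans this)
  · intro h
    by_contra hne
    exact h _ (mate_mem hne) (by simp)

lemma card_fix_mate [Fintype V] (hM : IsMatchingSet H (M : Set (Sym2 V))) :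
    (Finset.univ.filter (fun x => mate M x = x)).card + 2 * M.card = Fintype.card V := by
  rw [← card_coveredBy hM, ← Finset.card_univ,
    ← Finset.card_filter_add_card_filter_not (s := Finset.univ) (fun x => mate M x = x)]
  congr 2
  ext x
  rw [mem_coveredBy, Finset.mem_filter, mate_eq_self_iff hM, Exposed]
  simp

lemma card_moved_mate [Fintype V] {N : Finset (Sym2 V)}
    (hM : IsMatchingSet H (M : Set (Sym2 V))) (hN : IsMatchingSet H (N : Set (Sym2 V))) :
    (Finset.univ.filter (fun x => mate N x ≠ x ∧ mate N x ≠ mate M x)).card =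
      2 * (N \ M).card := by
  rw [← card_coveredBy (matching_mono hN Finset.sdiff_subset)]
  congr 1
  ext x
  rw [mem_coveredBy, Finset.mem_filter]
  constructor
  · rintro ⟨-, h1, h2⟩
    refine ⟨s(x, mate N x), ?_, by simp⟩
    rw [Finset.mem_sdiff]
    exact ⟨mate_mem h1, fun h => h2 (mate_eq hM h).symm⟩
  · rintro ⟨e, he, hx⟩
    obtain ⟨y, rfl⟩ := hx
    rw [Finset.mem_sdiff] at he
    have h1 := mate_eq hN he.1
    refine ⟨Finset.mem_univ _, ?_, ?_⟩
    · rw [h1]; exact (ne_of_mem_matching hN he.1).symm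
    · intro h2
      rw [h1] at h2
      apply he.2
      rw [h2]
      apply mate_mem
      rw [← h2]; exact (ne_of_mem_matching hN he.1).symm

/-- If every `M`-augmenting path has at least `k` edges, then the symmetric difference of `M`
with any matching `N` has at least `k (|N| - |M|)` edges: it contains `|N| - |M|`
vertex-disjoint augmenting paths. -/
lemma card_le_of_long_aug [Fintype V] {N : Finset (Sym2 V)}
    (hM : IsMatchingSet H (M : Set (Sym2 V))) (hN : IsMatchingSet H (N : Set (Sym2 V)))
    (k : ℕ) (hk : ∀ l (q : Fin (l + 1) → V), 1 ≤ l → IsPathSeq H q → IsAugSeq M q → k ≤ l) :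
    k * N.card ≤ k * M.card + ((M \ N).card + (N \ M).card) := by
  have hc := involution_count (mate_mate hM) (mate_mate hN) k (by
    intro v l hv hmv hl hstat
    set w := altSeq (mate M) (mate N) v with hw
    have hinj : ∀ i j : ℕ, i ≤ l → j ≤ l → w i = w j → i = j := fun i j hi hj he =>
      altSeq_injOn (mate_mate hM) (mate_mate hN) hv hmv hi hj he
    have hodd : ∀ i, i < l → i % 2 = 1 → s(w i, w (i + 1)) ∈ M := by
      intro i hi ho
      have h1 := hmv i hi
      rw [altSeq_succ_odd _ _ _ ho] at h1
      rw [hw, altSeq_succ_odd _ _ _ ho]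
      exact mate_mem h1.symm
    have heven : ∀ i, i < l → i % 2 = 0 → s(w i, w (i + 1)) ∈ N \ M := by
      intro i hi ho
      have h1 := hmv i hi
      have h2 := altSeq_step_ne (mate_mate hM) (mate_mate hN) hv hmv hi
      rw [altSeq_succ_even _ _ _ ho] at h1
      rw [hw, altSeq_succ_even _ _ _ ho, Finset.mem_sdiff]
      exact ⟨mate_mem h1.symm, fun h => h2 (mate_eq hM h).symm⟩
    apply hk l (fun i => w i) (by omega)
    · refine ⟨fun i j hij => Fin.ext (hinj i j (by omega) (by omega) hij), fun i => ?_⟩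
      simp only [Fin.val_castSucc, Fin.val_succ]
      rcases Nat.mod_two_eq_zero_or_one i with h | h
      · exact hN.1 (Finset.mem_sdiff.mp (heven i i.2 h)).1
      · exact hM.1 (hodd i i.2 h)
    · refine ⟨(mate_eq_self_iff hM).mp hv, (mate_eq_self_iff hM).mp hstat, fun i => ?_⟩
      simp only [Fin.val_castSucc, Fin.val_succ]
      constructor
      · intro h
        by_contra ho
        exact (Finset.mem_sdiff.mp (heven i i.2 (by omega))).2 h
      · exact hodd i i.2)
  have hmm : (Finset.univ.filter (fun x => mate M x ≠ x ∧ mate N x ≠ mate M x)).card =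
      2 * (M \ N).card := by
    rw [← card_moved_mate hN hM]
    simp only [ne_comm]
  have h3 := card_fix_mate hM
  have h4 := card_fix_mate hN
  rw [card_moved_mate hM hN, hmm] at hc
  have e1 : k * (Finset.univ.filter (fun x => mate M x = x)).card + k * (2 * M.card) =
    k * (Finset.univ.filter (fun x => mate N x = x)).card + k * (2 * N.card) := by
    rw [← mul_add, ← mul_add, h3, h4]
  nlinarith

end
end matchings

/-! ### Augmenting along a path and along a phase -/

section phases
open Classical
variable {V : Type} {H : SimpleGraph V}

lemma mem_seqEdges {k : ℕ} {q : Fin (k + 1) → V} {e : Sym2 V} :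
    e ∈ seqEdges q ↔ ∃ i : Fin k, s(q i.castSucc, q i.succ) = e := by
  simp [seqEdges]

lemma seqEdges_injective {k : ℕ} {q : Fin (k + 1) → V} (hq : Function.Injective q) :
    Function.Injective (fun i : Fin k => s(q i.castSucc, q i.succ)) := by
  intro i j h
  simp only [Sym2.eq_iff] at h
  rcases h with ⟨h, -⟩ | ⟨h1, h2⟩
  · exact Fin.castSucc_injective _ (hq h)
  · have h1 := congrArg Fin.val (hq h1)
    have h2 := congrArg Fin.val (hq h2)
    simp only [Fin.val_castSucc, Fin.val_succ] at h1 h2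
    omega

lemma card_seqEdges {k : ℕ} {q : Fin (k + 1) → V} (hq : Function.Injective q) :
    (seqEdges q).card = k := by
  unfold seqEdges
  rw [Finset.card_image_of_injective _ (seqEdges_injective hq)]
  simp

lemma mem_edge_iff {k : ℕ} {q : Fin (k + 1) → V} (hq : Function.Injective q)
    (i : Fin (k + 1)) (j : Fin k) :
    q i ∈ s(q j.castSucc, q j.succ) ↔ (i : ℕ) = j ∨ (i : ℕ) = j + 1 := by
  rw [Sym2.mem_iff, hq.eq_iff, hq.eq_iff, Fin.ext_iff, Fin.ext_iff]
  simp

lemma exists_index_of_mem {k : ℕ} {q : Fin (k + 1) → V} {e : Sym2 V} (he : e ∈ seqEdges q)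
    {v : V} (hv : v ∈ e) : ∃ i, v = q i := by
  obtain ⟨i, rfl⟩ := mem_seqEdges.mp he
  rcases Sym2.mem_iff.mp hv with h | h
  · exact ⟨_, h⟩
  · exact ⟨_, h⟩

/-- Augmenting paths have odd length, since their last edge is not in the matching. -/
lemma aug_odd {k : ℕ} {q : Fin (k + 1) → V} {M : Finset (Sym2 V)} (hk : 1 ≤ k)
    (hM : IsAugSeq M q) : k % 2 = 1 := by
  by_contra h
  obtain ⟨j, rfl⟩ : ∃ j, k = j + 1 := ⟨k - 1, by omega⟩
  have := (hM.2.2 (Fin.last j)).mpr (by rw [Fin.val_last]; omega)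
  exact hM.2.1 _ this (by simp)

/-- An inner vertex of an augmenting path lies on an edge of the path belonging to the
matching. -/
lemma aug_inner {k : ℕ} {q : Fin (k + 1) → V} {M : Finset (Sym2 V)}
    (hM : IsAugSeq M q) {i : Fin (k + 1)} (h0 : i ≠ 0) (hl : i ≠ Fin.last k) :
    ∃ e ∈ seqEdges q, e ∈ M ∧ q i ∈ e := by
  have h0' : (i : ℕ) ≠ 0 := fun h => h0 (Fin.ext h)
  have hl' : (i : ℕ) ≠ k := fun h => hl (Fin.ext h)
  have hi := i.2
  rcases Nat.mod_two_eq_zero_or_one i with h | h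
  · let j : Fin k := ⟨i - 1, by omega⟩
    refine ⟨_, mem_seqEdges.mpr ⟨j, rfl⟩, (hM.2.2 j).mpr (by simp only [j]; omega), ?_⟩
    have : i = j.succ := Fin.ext (by simp [j]; omega)
    rw [this]; simp
  · let j : Fin k := ⟨i, by omega⟩
    refine ⟨_, mem_seqEdges.mpr ⟨j, rfl⟩, (hM.2.2 j).mpr h, ?_⟩
    have : i = j.castSucc := Fin.ext (by simp [j])
    rw [this]; simp

/-- Every vertex of an augmenting path lies on an edge of the path outside the matching. -/
lemma aug_outer {k : ℕ} {q : Fin (k + 1) → V} {M : Finset (Sym2 V)} (hk : 1 ≤ k)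
    (hM : IsAugSeq M q) (i : Fin (k + 1)) : ∃ e ∈ seqEdges q, e ∉ M ∧ q i ∈ e := by
  have hodd := aug_odd hk hM
  have hi := i.2
  rcases Nat.mod_two_eq_zero_or_one i with h | h
  · let j : Fin k := ⟨i, by omega⟩
    refine ⟨_, mem_seqEdges.mpr ⟨j, rfl⟩, fun h' => ?_, ?_⟩
    · have := (hM.2.2 j).mp h'
      simp only [j] at this; omega
    · have : i = j.castSucc := Fin.ext (by simp [j])
      rw [this]; simp
  · let j : Fin k := ⟨i - 1, by omega⟩
    refine ⟨_, mem_seqEdges.mpr ⟨j, rfl⟩, fun h' => ?_, ?_⟩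
    · have := (hM.2.2 j).mp h'
      simp only [j] at this; omega
    · have : i = j.succ := Fin.ext (by simp [j]; omega)
      rw [this]; simp

/-- A matching edge meeting an augmenting path is an edge of the path. -/
lemma mem_seqEdges_of_touch {k : ℕ} {q : Fin (k + 1) → V} {M : Finset (Sym2 V)}
    (hMm : IsMatchingSet H (M : Set (Sym2 V))) (hM : IsAugSeq M q) {e : Sym2 V} (he : e ∈ M)
    {i : Fin (k + 1)} (hi : q i ∈ e) : e ∈ seqEdges q := by
  by_cases h0 : i = 0
  · subst h0; exact absurd hi (hM.1 e he)
  by_cases hl : i = Fin.last k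
  · subst hl; exact absurd hi (hM.2.1 e he)
  obtain ⟨f, hf, hfM, hif⟩ := aug_inner hM h0 hl
  rw [matching_unique hMm he hfM hi hif]; exact hf

lemma matching_augment {k : ℕ} {q : Fin (k + 1) → V} {M : Finset (Sym2 V)}
    (hMm : IsMatchingSet H (M : Set (Sym2 V))) (hq : IsPathSeq H q)
    (hM : IsAugSeq M q) :
    IsMatchingSet H (symmDiff M (seqEdges q) : Finset (Sym2 V)) := by
  constructor
  · intro e he
    rw [Finset.mem_coe, Finset.mem_symmDiff] at he
    rcases he with he | he
    · exact hMm.1 he.1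
    · obtain ⟨i, rfl⟩ := mem_seqEdges.mp he.1
      exact hq.2 i
  · intro e he f hf hne v ⟨hve, hvf⟩
    apply hne
    rw [Finset.mem_coe, Finset.mem_symmDiff] at he hf
    have hmix : ∀ e f : Sym2 V, v ∈ e → v ∈ f → e ∈ M → e ∉ seqEdges q → f ∈ seqEdges q →
        False := by
      intro e f hve hvf he he' hf
      obtain ⟨i, rfl⟩ := exists_index_of_mem hf hvf
      exact he' (mem_seqEdges_of_touch hMm hM he hve)
    rcases he with ⟨he, he'⟩ | ⟨he, he'⟩ <;> rcases hf with ⟨hf, hf'⟩ | ⟨hf, hf'⟩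
    · exact matching_unique hMm he hf hve hvf
    · exact (hmix e f hve hvf he he' hf).elim
    · exact (hmix f e hvf hve hf hf' he).elim
    · obtain ⟨l, rfl⟩ := exists_index_of_mem he hve
      obtain ⟨i, rfl⟩ := mem_seqEdges.mp he
      obtain ⟨j, rfl⟩ := mem_seqEdges.mp hf
      rw [hM.2.2] at he' hf'
      rw [mem_edge_iff hq.1] at hve hvf
      have : i = j := Fin.ext (by omega)
      rw [this]

lemma sum_alternating (k : ℕ) :
    ∑ i ∈ Finset.range k, (if i % 2 = 1 then (-1 : ℤ) else 1) = (k % 2 : ℕ) := by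
  induction k with
  | zero => simp
  | succ k ih =>
    rw [Finset.sum_range_succ, ih]
    split_ifs <;> omega

lemma card_symmDiff_eq (A B : Finset (Sym2 V)) :
    (symmDiff A B).card + 2 * (A ∩ B).card = A.card + B.card := by
  have h : symmDiff A B = (A \ B) ∪ (B \ A) := rfl
  rw [h, Finset.card_union_of_disjoint]
  · have := Finset.card_sdiff_add_card_inter A B
    have := Finset.card_sdiff_add_card_inter B A
    rw [Finset.inter_comm] at this
    omega
  · rw [Finset.disjoint_left]; intro a h1 h2
    rw [Finset.mem_sdiff] at h1 h2
    exact h1.2 h2.1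

lemma card_augment {k : ℕ} {q : Fin (k + 1) → V} {M : Finset (Sym2 V)} (hk : 1 ≤ k)
    (hq : IsPathSeq H q) (hM : IsAugSeq M q) :
    (symmDiff M (seqEdges q)).card = M.card + 1 := by
  have hodd := aug_odd hk hM
  have h1 : ∑ e ∈ seqEdges q, (if e ∈ M then (-1 : ℤ) else 1) = 1 := by
    unfold seqEdges
    rw [Finset.sum_image (fun i _ j _ h => seqEdges_injective hq.1 h)]
    simp only [hM.2.2]
    rw [Fin.sum_univ_eq_sum_range (fun i => if i % 2 = 1 then (-1 : ℤ) else 1),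
      sum_alternating, hodd]
    rfl
  rw [Finset.sum_ite] at h1
  simp only [Finset.sum_const, nsmul_eq_mul, mul_one] at h1
  have h2 := card_symmDiff_eq M (seqEdges q)
  have h3 := Finset.card_filter_add_card_filter_not (s := seqEdges q) (fun e => e ∈ M)
  rw [Finset.filter_mem_eq_inter] at h1 h3
  rw [Finset.inter_comm] at h2
  omega

/-- The state of a phase: `A` is the edge set of `n` vertex-disjoint `M`-augmenting paths of
length `k`, recorded by the properties that are used afterwards. -/
structure PhaseInv (H : SimpleGraph V) (M : Finset (Sym2 V)) (k : ℕ) (A : Finset (Sym2 V)) :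
    Prop where
  matching : IsMatchingSet H (symmDiff M A : Finset (Sym2 V))
  card : ∃ n, A.card = n * k ∧ (symmDiff M A).card = M.card + n
  cover : ∀ e ∈ A, ∀ v ∈ e, ∃ f ∈ A, f ∉ M ∧ v ∈ f

lemma not_mem_of_not_touches {k : ℕ} {q : Fin (k + 1) → V} {A : Finset (Sym2 V)}
    (h : ¬ SeqTouches A q) {e : Sym2 V} (he : e ∈ seqEdges q) : e ∉ A := by
  intro hA
  obtain ⟨i, rfl⟩ := mem_seqEdges.mp he
  exact h ⟨i.castSucc, _, hA, by simp⟩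

/-- A path disjoint from `A` is augmenting for `M` iff it is so for `M ⊕ A`. -/
lemma aug_symmDiff_iff {k : ℕ} {q : Fin (k + 1) → V} {M A : Finset (Sym2 V)}
    (h : ¬ SeqTouches A q) : IsAugSeq (symmDiff M A) q ↔ IsAugSeq M q := by
  have hexp : ∀ i, Exposed (symmDiff M A) (q i) ↔ Exposed M (q i) := by
    intro i
    constructor
    · intro hx e he hi
      exact hx e (Finset.mem_symmDiff.mpr (Or.inl ⟨he, fun hA => h ⟨i, e, hA, hi⟩⟩)) hi
    · intro hx e he hi
      rcases Finset.mem_symmDiff.mp he with he | he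
      · exact hx e he.1 hi
      · exact h ⟨i, e, he.1, hi⟩
  unfold IsAugSeq
  rw [hexp, hexp]
  refine and_congr_right fun _ => and_congr_right fun _ => forall_congr' fun i => ?_
  have : s(q i.castSucc, q i.succ) ∉ A :=
    not_mem_of_not_touches h (mem_seqEdges.mpr ⟨i, rfl⟩)
  rw [Finset.mem_symmDiff]
  tauto

lemma PhaseInv.union {M A : Finset (Sym2 V)} {k : ℕ} (hk : 1 ≤ k) (hA : PhaseInv H M k A)
    {q : Fin (k + 1) → V} (hq : IsPathSeq H q) (hM : IsAugSeq M q) (ht : ¬ SeqTouches A q) :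
    PhaseInv H M k (A ∪ seqEdges q) := by
  have hdisj : Disjoint A (seqEdges q) := by
    rw [Finset.disjoint_right]
    exact fun e he => not_mem_of_not_touches ht he
  have hM' := (aug_symmDiff_iff ht).mpr hM
  have hsd : symmDiff M (A ∪ seqEdges q) = symmDiff (symmDiff M A) (seqEdges q) := by
    rw [symmDiff_assoc, hdisj.symmDiff_eq_sup]; rfl
  refine ⟨?_, ?_, ?_⟩
  · rw [hsd]; exact matching_augment hA.matching hq hM'
  · obtain ⟨n, h1, h2⟩ := hA.card
    refine ⟨n + 1, ?_, ?_⟩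
    · rw [Finset.card_union_of_disjoint hdisj, h1, card_seqEdges hq.1]; ring
    · rw [hsd, card_augment hk hq hM', h2]; ring
  · intro e he v hv
    rcases Finset.mem_union.mp he with he | he
    · obtain ⟨f, h1, h2, h3⟩ := hA.cover e he v hv
      exact ⟨f, Finset.mem_union_left _ h1, h2, h3⟩
    · obtain ⟨i, rfl⟩ := exists_index_of_mem he hv
      obtain ⟨f, h1, h2, h3⟩ := aug_outer hk hM i
      exact ⟨f, Finset.mem_union_right _ h1, h2, h3⟩

/-- A path of `G` without edges of `F` is a path of `G` with `F` deleted. -/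
lemma isPathSeq_delete_iff {G : SimpleGraph V} {F : Finset (Sym2 V)} {k : ℕ}
    {q : Fin (k + 1) → V} :
    IsPathSeq (G.deleteEdges F) q ↔ IsPathSeq G q ∧ ∀ e ∈ seqEdges q, e ∉ F := by
  simp only [IsPathSeq, SimpleGraph.deleteEdges_adj, mem_seqEdges, forall_exists_index,
    forall_apply_eq_imp_iff, Finset.mem_coe, forall_and, and_assoc]

lemma subset_foldl_pathStep {G : SimpleGraph V} {M F : Finset (Sym2 V)} {k : ℕ}
    (L : List (Fin (k + 1) → V)) (A : Finset (Sym2 V)) :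
    A ⊆ L.foldl (pathStep G M F) A := by
  induction L generalizing A with
  | nil => simp
  | cons q L ih =>
    rw [List.foldl_cons]
    refine Finset.Subset.trans ?_ (ih _)
    unfold pathStep
    split_ifs
    · exact Finset.subset_union_left
    · exact Finset.Subset.refl _

lemma foldl_inv {G : SimpleGraph V} {M F : Finset (Sym2 V)} {k : ℕ} (hk : 1 ≤ k)
    (L : List (Fin (k + 1) → V)) (A : Finset (Sym2 V))
    (hA : PhaseInv (G.deleteEdges F) M k A) :
    PhaseInv (G.deleteEdges F) M k (L.foldl (pathStep G M F) A) := by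
  induction L generalizing A with
  | nil => exact hA
  | cons q L ih =>
    rw [List.foldl_cons]
    apply ih
    unfold pathStep
    split_ifs with h
    · exact hA.union hk (isPathSeq_delete_iff.mpr ⟨h.1, h.2.1⟩) h.2.2.1 h.2.2.2
    · exact hA

/-- The collection obtained at the end of a phase is maximal. -/
lemma foldl_maximal {G : SimpleGraph V} {M F : Finset (Sym2 V)} {k : ℕ} (hk : 1 ≤ k)
    (L : List (Fin (k + 1) → V)) (A : Finset (Sym2 V)) {q : Fin (k + 1) → V} (hq : q ∈ L)
    (hp : IsPathSeq (G.deleteEdges F) q) (hM : IsAugSeq M q) :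
    SeqTouches (L.foldl (pathStep G M F) A) q := by
  induction L generalizing A with
  | nil => simp at hq
  | cons q' L ih =>
    rw [List.foldl_cons]
    rcases List.mem_cons.mp hq with rfl | h
    · suffices SeqTouches (pathStep G M F A q) q by
        obtain ⟨i, e, he, hi⟩ := this
        exact ⟨i, e, subset_foldl_pathStep _ _ he, hi⟩
      unfold pathStep
      have hp' := isPathSeq_delete_iff.mp hp
      split_ifs with h
      · obtain ⟨f, h1, -, h3⟩ := aug_outer hk hM 0
        exact ⟨0, f, Finset.mem_union_right _ h1, h3⟩
      · by_contra ht
        exact h ⟨hp'.1, hp'.2, hM, ht⟩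
    · exact ih _ h

/-- There are no `M`-augmenting paths of length between `1` and `k`. -/
def NoShortAug (H : SimpleGraph V) (M : Finset (Sym2 V)) (k : ℕ) : Prop :=
  ∀ l (q : Fin (l + 1) → V), 1 ≤ l → l ≤ k → IsPathSeq H q → ¬ IsAugSeq M q

/-- The Hopcroft–Karp step. An augmenting path `P` of length at most `k` for `M' = M ⊕ A` would
make `M' ⊕ P` a matching with `n + 1` edges more than `M` that differs from `M` only in
`A ⊕ P`. The lower bound `k (n + 1)` on `|A ⊕ P|` makes `P` edge-disjoint from `A`, hence
vertex-disjoint from it, contradicting maximality. -/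
lemma noShortAug_step [Fintype V] {M A : Finset (Sym2 V)} {k : ℕ}
    (hMm : IsMatchingSet H (M : Set (Sym2 V))) (hno : NoShortAug H M (k - 1))
    (hA : PhaseInv H M k A)
    (hmax : ∀ q : Fin (k + 1) → V, IsPathSeq H q → IsAugSeq M q → SeqTouches A q) :
    NoShortAug H (symmDiff M A) k := by
  intro l q hl1 hlk hq hM'
  have hN := matching_augment hA.matching hq hM'
  obtain ⟨n, hn1, hn2⟩ := hA.card
  have hNc := card_augment hl1 hq hM'
  have hcount := card_le_of_long_aug hMm hN k (by
    intro l' q' h1 h2 h3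
    by_contra hlt
    exact hno l' q' h1 (by omega) h2 h3)
  have hdiff : (M \ symmDiff (symmDiff M A) (seqEdges q)).card +
      (symmDiff (symmDiff M A) (seqEdges q) \ M).card = (symmDiff A (seqEdges q)).card := by
    rw [← Finset.card_union_of_disjoint disjoint_sdiff_sdiff]
    congr 1
    rw [symmDiff_assoc]
    change symmDiff M (symmDiff M (symmDiff A (seqEdges q))) = _
    rw [symmDiff_symmDiff_cancel_left]
  have hs := card_symmDiff_eq A (seqEdges q)
  rw [card_seqEdges hq.1, hn1] at hs
  rw [hdiff, hNc, hn2] at hcount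
  have e1 : k * (M.card + n + 1) = k * M.card + n * k + k := by ring
  have hlk' : l = k := by omega
  have hinter : (A ∩ seqEdges q).card = 0 := by omega
  rw [Finset.card_eq_zero] at hinter
  subst hlk'
  have ht : ¬ SeqTouches A q := by
    rintro ⟨i, e, he, hi⟩
    obtain ⟨f, hf, hfM, hif⟩ := hA.cover e he _ hi
    have hfq := mem_seqEdges_of_touch hA.matching hM'
      (Finset.mem_symmDiff.mpr (Or.inr ⟨hf, hfM⟩)) hif
    have : f ∈ A ∩ seqEdges q := Finset.mem_inter.mpr ⟨hf, hfq⟩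
    rw [hinter] at this
    simp at this
  exact ht (hmax q hq ((aug_symmDiff_iff ht).mp hM'))

lemma PhaseInv.empty {M : Finset (Sym2 V)} {k : ℕ}
    (hMm : IsMatchingSet H (M : Set (Sym2 V))) : PhaseInv H M k ∅ := by
  have h : symmDiff M ∅ = M := symmDiff_bot M
  exact ⟨by rw [h]; exact hMm, ⟨0, by simp, by rw [h]; rfl⟩, by simp⟩

lemma phase_spec [Fintype V] {G : SimpleGraph V} {M F M' : Finset (Sym2 V)} {k : ℕ}
    (hMm : IsMatchingSet (G.deleteEdges F) (M : Set (Sym2 V)))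
    (hno : NoShortAug (G.deleteEdges F) M k)
    (L : List (Fin (k + 1 + 1) → V)) (hL : ∀ q, q ∈ L)
    (hM' : ∀ e, e ∈ M' ↔ e ∈ M ∧ e ∉ L.foldl (pathStep G M F) ∅ ∨
      e ∈ L.foldl (pathStep G M F) ∅ ∧ e ∉ M) :
    IsMatchingSet (G.deleteEdges F) (M' : Set (Sym2 V)) ∧
      NoShortAug (G.deleteEdges F) M' (k + 1) := by
  have hinv := foldl_inv (by omega) L ∅ (PhaseInv.empty (k := k + 1) hMm)
  have heq : M' = symmDiff M (L.foldl (pathStep G M F) ∅) := by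
    ext e
    rw [hM', Finset.mem_symmDiff]
  rw [heq]
  exact ⟨hinv.matching, noShortAug_step hMm hno hinv fun q hq hM =>
    foldl_maximal (by omega) _ _ (hL q) hq hM⟩

/-- After `k` phases, the algorithm holds a matching of `G` with `F` deleted that has no
augmenting path of length at most `k`. -/
lemma algMatch_spec {D : Type} [Fintype V] [LinearOrder V] [LinearOrder D]
    (G : SimpleGraph V) (F : Finset (Sym2 V)) (r : V → D) (k : ℕ) :
    IsMatchingSet (G.deleteEdges F) (algMatch G F r k : Set (Sym2 V)) ∧
      NoShortAug (G.deleteEdges F) (algMatch G F r k) k := by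
  induction k with
  | zero =>
    refine ⟨?_, fun l q h1 h2 => by omega⟩
    simp [algMatch, IsMatchingSet]
  | succ k ih =>
    refine phase_spec ih.1 ih.2 (sortedSeqs r (k + 1)) (fun q => ?_) (fun e => ?_)
    · simp [sortedSeqs]
    · simp [algMatch, phase]

end phases

/-! ### Comparison with a maximum matching of `G` -/

section approx
open Classical
variable {V : Type} [Fintype V]

lemma exists_max_matching (G : SimpleGraph V) :
    ∃ M : Finset (Sym2 V), IsMatchingSet G (M : Set (Sym2 V)) ∧
      M.card = matchingNumber G ∧
      ∀ M' : Finset (Sym2 V), IsMatchingSet G (M' : Set (Sym2 V)) → M'.card ≤ M.card := by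
  set S := {n : ℕ | ∃ M : Set (Sym2 V), IsMatchingSet G M ∧ M.ncard = n} with hS
  have hbdd : BddAbove S := by
    refine ⟨(Set.univ : Set (Sym2 V)).ncard, ?_⟩
    rintro n ⟨M, -, rfl⟩
    exact Set.ncard_le_ncard (Set.subset_univ _) (Set.toFinite _)
  have hne : S.Nonempty := ⟨0, ∅, by simp [IsMatchingSet], by simp⟩
  obtain ⟨M, hM, hc⟩ := Nat.sSup_mem hne hbdd
  refine ⟨M.toFinset, by simpa using hM, ?_, ?_⟩
  · rw [← Set.ncard_eq_toFinset_card']; exact hc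
  · intro M' hM'
    rw [← Set.ncard_eq_toFinset_card', hc]
    exact le_csSup hbdd ⟨M', hM', Set.ncard_coe_finset M'⟩

/-- A matching of `G - F` without augmenting paths of length at most `t` has at least
`t / (t + 2) * (ν(G) - |F|)` edges. -/
lemma approx_of_noShortAug {G : SimpleGraph V} {F M : Finset (Sym2 V)} {t : ℕ}
    (hM : IsMatchingSet (G.deleteEdges F) (M : Set (Sym2 V)))
    (hno : NoShortAug (G.deleteEdges F) M t) :
    t * matchingNumber G ≤ (t + 2) * M.card + t * F.card := by
  obtain ⟨N, hN, hNc, -⟩ := exists_max_matching G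
  have hNF : IsMatchingSet (G.deleteEdges F) (N \ F : Finset (Sym2 V)) := by
    refine ⟨fun e he => ?_, (matching_mono hN Finset.sdiff_subset).2⟩
    rw [Finset.mem_coe, Finset.mem_sdiff] at he
    rw [SimpleGraph.edgeSet_deleteEdges]
    exact ⟨hN.1 he.1, he.2⟩
  have h1 := card_le_of_long_aug hM hNF (t + 1) (by
    intro l q hl hq hq'
    by_contra hlt
    exact hno l q hl (by omega) hq hq')
  have h2 : (M \ (N \ F)).card ≤ M.card := Finset.card_le_card Finset.sdiff_subset
  have h3 : ((N \ F) \ M).card ≤ (N \ F).card := Finset.card_le_card Finset.sdiff_subset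
  have h4 : N.card ≤ (N \ F).card + F.card := by
    have := Finset.card_sdiff_add_card_inter N F
    have := Finset.card_le_card (Finset.inter_subset_right (s₁ := N) (s₂ := F))
    omega
  rw [← hNc]
  nlinarith

/-- A maximum matching meets every edge, so its `2 ν(G)` vertices carry all edges. -/
lemma card_edges_le {G : SimpleGraph V} {Δ : ℕ}
    (hdeg : ∀ w : V, (G.neighborSet w).ncard ≤ Δ) :
    G.edgeFinset.card ≤ 2 * Δ * matchingNumber G := by
  obtain ⟨M, hM, hMc, hmax⟩ := exists_max_matching G
  have hsub : G.edgeFinset ⊆ (coveredBy M).biUnion (fun v => G.incidenceFinset v) := by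
    intro e he
    rw [SimpleGraph.mem_edgeFinset] at he
    by_contra hcon
    have hfree : ∀ v ∈ e, ∀ f ∈ M, v ∉ f := by
      intro v hv f hf hvf
      apply hcon
      rw [Finset.mem_biUnion]
      refine ⟨v, mem_coveredBy.mpr ⟨f, hf, hvf⟩, ?_⟩
      rw [SimpleGraph.mem_incidenceFinset]
      exact ⟨he, hv⟩
    have hnot : e ∉ M := by
      intro h
      induction e with
      | h x y => exact hfree x (by simp) _ h (by simp)
    have := hmax (insert e M) (by
      constructor
      · intro f hf
        rw [Finset.mem_coe, Finset.mem_insert] at hf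
        rcases hf with rfl | hf
        · exact he
        · exact hM.1 hf
      · intro f hf g hg hne v ⟨hvf, hvg⟩
        rw [Finset.mem_coe, Finset.mem_insert] at hf hg
        rcases hf with rfl | hf <;> rcases hg with rfl | hg
        · exact hne rfl
        · exact hfree v hvf g hg hvg
        · exact hfree v hvg f hf hvf
        · exact hne (matching_unique hM hf hg hvf hvg))
    rw [Finset.card_insert_of_notMem hnot] at this
    omega
  refine (Finset.card_le_card hsub).trans ?_
  refine (Finset.card_biUnion_le_card_mul _ _ Δ ?_).trans ?_
  · intro v _
    rw [SimpleGraph.card_incidenceFinset_eq_degree, ← SimpleGraph.card_neighborSet_eq_degree,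
      ← Nat.card_eq_fintype_card]
    exact hdeg v
  · rw [card_coveredBy hM, hMc]
    exact le_of_eq (by ring)

lemma ncard_ballSet_le {G : SimpleGraph V} {Δ : ℕ}
    (hdeg : ∀ w : V, (G.neighborSet w).ncard ≤ Δ) (u : V) (t : ℕ) :
    (ballSet G u t).ncard ≤ (Δ + 1) ^ t := by
  induction t with
  | zero =>
    have : ballSet G u 0 ⊆ {u} := by
      intro x hx
      simp only [ballSet, Set.mem_ofPred_eq, Nat.cast_zero, nonpos_iff_eq_zero,
        SimpleGraph.edist_eq_zero_iff] at hx
      simp [hx]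
    simpa using Set.ncard_le_ncard this
  | succ t ih =>
    have hsub : (ballSet G u (t + 1)).toFinset ⊆
        (ballSet G u t).toFinset.biUnion (fun w => insert w (G.neighborSet w).toFinset) := by
      intro x hx
      rw [Set.mem_toFinset] at hx
      change G.edist u x ≤ ((t + 1 : ℕ) : ℕ∞) at hx
      simp only [Finset.mem_biUnion, Set.mem_toFinset, Finset.mem_insert,
        SimpleGraph.mem_neighborSet]
      rw [SimpleGraph.edist_comm] at hx
      obtain ⟨p, hp⟩ := SimpleGraph.exists_walk_of_edist_ne_top
        (ne_top_of_le_ne_top (ENat.natCast_ne_top _) hx)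
      rw [← hp] at hx
      have hx : p.length ≤ t + 1 := by exact_mod_cast hx
      cases p with
      | nil => exact ⟨u, by simp [ballSet], Or.inl rfl⟩
      | @cons _ w _ h p =>
        refine ⟨w, ?_, Or.inr h.symm⟩
        change G.edist u w ≤ (t : ℕ∞)
        rw [SimpleGraph.edist_comm]
        refine (SimpleGraph.edist_le p).trans ?_
        rw [SimpleGraph.Walk.length_cons] at hx
        exact_mod_cast (by omega : p.length ≤ t)
    rw [Set.ncard_eq_toFinset_card']
    refine (Finset.card_le_card hsub).trans ?_
    refine (Finset.card_biUnion_le_card_mul _ _ (Δ + 1) ?_).trans ?_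
    · intro w _
      refine (Finset.card_insert_le _ _).trans ?_
      rw [← Set.ncard_eq_toFinset_card']
      exact Nat.add_le_add_right (hdeg w) 1
    · rw [← Set.ncard_eq_toFinset_card', pow_succ]
      exact Nat.mul_le_mul_right _ ih

end approx

/-! ### The expected number of forbidden edges -/

section probability
open Classical
variable {V D : Type} [Fintype V] [Fintype D] {μ : D → ℝ}

lemma sum_prod_eq_one (hsum : ∑ x, μ x = 1) : ∑ r : V → D, ∏ v, μ (r v) = 1 := by
  have := Fintype.prod_sum (fun (_ : V) (d : D) => μ d)
  rw [← this]; simp [hsum]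

lemma probOf_eq (P : (V → D) → Prop) :
    probOf μ P = ∑ r : V → D, (if P r then ∏ v, μ (r v) else 0) := by
  unfold probOf
  rw [Finset.sum_filter]

lemma probOf_mono (h0 : ∀ x, 0 ≤ μ x) {P Q : (V → D) → Prop} (h : ∀ r, P r → Q r) :
    probOf μ P ≤ probOf μ Q := by
  unfold probOf
  apply Finset.sum_le_sum_of_subset_of_nonneg
  · intro r hr
    simp only [Finset.mem_filter, Finset.mem_univ, true_and] at hr ⊢
    exact h r hr
  · exact fun r _ _ => Finset.prod_nonneg fun v _ => h0 _

lemma probOf_compl (hsum : ∑ x, μ x = 1) (P : (V → D) → Prop) :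
    probOf μ P + probOf μ (fun r => ¬ P r) = 1 := by
  unfold probOf
  rw [← sum_prod_eq_one (V := V) hsum]
  rw [← Finset.sum_filter_add_sum_filter_not Finset.univ P]
  congr!

/-- Two given vertices receive the same label with probability `∑ x, μ x ^ 2 ≤ p`. -/
lemma probOf_collision (h0 : ∀ x, 0 ≤ μ x) (hsum : ∑ x, μ x = 1) {p : ℝ}
    (hp : ∀ x, μ x ≤ p) {a b : V} (hab : a ≠ b) :
    probOf μ (fun r : V → D => r a = r b) ≤ p := by
  have h1 : ∀ r : V → D, (if r a = r b then ∏ v, μ (r v) else 0) =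
      ∑ x, ∏ v, (if v = a ∨ v = b then (if r v = x then μ x else 0) else μ (r v)) := by
    intro r
    have h2 : ∀ x, ∏ v, (if v = a ∨ v = b then (if r v = x then μ x else 0) else μ (r v)) =
        if x = r a then (if r a = r b then ∏ v, μ (r v) else 0) else 0 := by
      intro x
      by_cases hxa : x = r a
      · by_cases hxb : r a = r b
        · rw [if_pos hxa, if_pos hxb]
          refine Finset.prod_congr rfl fun v _ => ?_
          split_ifs with hv hv'
          · rw [hv']
          · exfalso
            rcases hv with rfl | rfl
            · exact hv' hxa.symm
            · exact hv' (hxb.symm.trans hxa.symm)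
          · rfl
        · rw [if_pos hxa, if_neg hxb]
          apply Finset.prod_eq_zero (Finset.mem_univ b)
          rw [if_pos (Or.inr rfl), if_neg]
          intro h; exact hxb (hxa.symm.trans h.symm)
      · rw [if_neg hxa]
        apply Finset.prod_eq_zero (Finset.mem_univ a)
        rw [if_pos (Or.inl rfl), if_neg (Ne.symm hxa)]
    simp only [h2, Finset.sum_ite_eq', Finset.mem_univ, if_true]
  rw [probOf_eq, Finset.sum_congr rfl fun r _ => h1 r, Finset.sum_comm]
  have h3 : ∀ x, ∑ r : V → D, ∏ v,
      (if v = a ∨ v = b then (if r v = x then μ x else 0) else μ (r v)) = μ x * μ x := by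
    intro x
    have := Fintype.prod_sum (fun (v : V) (d : D) =>
      if v = a ∨ v = b then (if d = x then μ x else 0) else μ d)
    rw [← this]
    have h4 : ∀ v : V, (∑ d, if v = a ∨ v = b then (if d = x then μ x else 0) else μ d) =
        if v ∈ ({a, b} : Finset V) then μ x else 1 := by
      intro v
      by_cases hv : v = a ∨ v = b
      · simp [hv]
      · simp [hv, hsum]
    simp only [h4]
    rw [Finset.prod_ite_mem, Finset.univ_inter, Finset.prod_pair hab]
  rw [Finset.sum_congr rfl fun x _ => h3 x]
  calc ∑ x, μ x * μ x ≤ ∑ x, p * μ x :=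
        Finset.sum_le_sum fun x _ => mul_le_mul_of_nonneg_right (hp x) (h0 x)
    _ = p := by rw [← Finset.mul_sum, hsum, mul_one]

lemma probOf_exists_le (h0 : ∀ x, 0 ≤ μ x) {ι : Type} (S : Finset ι)
    (P : ι → (V → D) → Prop) :
    probOf μ (fun r => ∃ i ∈ S, P i r) ≤ ∑ i ∈ S, probOf μ (P i) := by
  simp only [probOf_eq]
  rw [Finset.sum_comm]
  refine Finset.sum_le_sum fun r _ => ?_
  have hn : 0 ≤ ∏ v, μ (r v) := Finset.prod_nonneg fun v _ => h0 _
  have hn' : ∀ i ∈ S, 0 ≤ if P i r then ∏ v, μ (r v) else 0 := fun i _ => by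
    split_ifs <;> simp [hn]
  split_ifs with h
  · obtain ⟨i, hi, hP⟩ := h
    have := Finset.single_le_sum hn' hi
    rwa [if_pos hP] at this
  · exact Finset.sum_nonneg hn'

/-- An edge is forbidden only if two of the at most `2 (Δ + 1) ^ t` vertices near it collide. -/
lemma probOf_mem_forbidden (h0 : ∀ x, 0 ≤ μ x) (hsum : ∑ x, μ x = 1) {p : ℝ}
    (hp : ∀ x, μ x ≤ p) (hp0 : 0 ≤ p) {G : SimpleGraph V} {Δ : ℕ}
    (hdeg : ∀ w : V, (G.neighborSet w).ncard ≤ Δ) (t : ℕ) (e : Sym2 V) :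
    probOf μ (fun r : V → D => e ∈ forbiddenEdges G r t) ≤
      ((2 * (Δ + 1) ^ t) ^ 2 : ℕ) * p := by
  induction e with
  | h u w =>
  set B := (ballSet G u t ∪ ballSet G w t).toFinset with hB
  have hBc : B.card ≤ 2 * (Δ + 1) ^ t := by
    rw [hB, ← Set.ncard_eq_toFinset_card']
    refine (Set.ncard_union_le _ _).trans ?_
    have := ncard_ballSet_le hdeg u t
    have := ncard_ballSet_le hdeg w t
    omega
  have h1 : probOf μ (fun r : V → D => s(u, w) ∈ forbiddenEdges G r t) ≤
      probOf μ (fun r : V → D => ∃ i ∈ B.offDiag, r i.1 = r i.2) := by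
    apply probOf_mono h0
    intro r hr
    simp only [forbiddenEdges, Finset.mem_filter, Finset.mem_univ, true_and] at hr
    obtain ⟨-, u', w', he, a, ha, b, hb, hab, hr⟩ := hr
    have hB' : ballSet G u' t ∪ ballSet G w' t = ballSet G u t ∪ ballSet G w t := by
      rcases Sym2.eq_iff.mp he with ⟨rfl, rfl⟩ | ⟨rfl, rfl⟩
      · rfl
      · exact Set.union_comm _ _
    rw [hB'] at ha hb
    exact ⟨(a, b), by rw [Finset.mem_offDiag]; exact ⟨by simpa [hB] using ha,
      by simpa [hB] using hb, hab⟩, hr⟩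
  refine h1.trans ((probOf_exists_le h0 _ _).trans ?_)
  refine (Finset.sum_le_card_nsmul _ _ p ?_).trans ?_
  · intro i hi
    exact probOf_collision h0 hsum hp (Finset.mem_offDiag.mp hi).2.2
  · rw [nsmul_eq_mul]
    apply mul_le_mul_of_nonneg_right _ hp0
    norm_cast
    rw [Finset.offDiag_card]
    calc B.card * B.card - B.card ≤ B.card * B.card := Nat.sub_le _ _
      _ ≤ _ := by rw [← sq]; exact Nat.pow_le_pow_left hBc 2

/-- Markov's inequality for the number of forbidden edges. -/
lemma probOf_many_forbidden (h0 : ∀ x, 0 ≤ μ x) (hsum : ∑ x, μ x = 1) {p : ℝ}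
    (hp : ∀ x, μ x ≤ p) (hp0 : 0 ≤ p) {G : SimpleGraph V} {Δ : ℕ}
    (hdeg : ∀ w : V, (G.neighborSet w).ncard ≤ Δ) (t : ℕ) (c : ℝ) :
    probOf μ (fun r : V → D => c ≤ (forbiddenEdges G r t).card) * c ≤
      G.edgeFinset.card * (((2 * (Δ + 1) ^ t) ^ 2 : ℕ) * p) := by
  have hexp : ∑ r : V → D, (∏ v, μ (r v)) * ((forbiddenEdges G r t).card : ℝ) =
      ∑ e ∈ G.edgeFinset, probOf μ (fun r : V → D => e ∈ forbiddenEdges G r t) := by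
    simp only [probOf_eq]
    rw [Finset.sum_comm]
    refine Finset.sum_congr rfl fun r _ => ?_
    have hsub : forbiddenEdges G r t ⊆ G.edgeFinset := by
      intro e h
      rw [SimpleGraph.mem_edgeFinset]
      simp only [forbiddenEdges, Finset.mem_filter] at h
      exact h.2.1
    refine Eq.trans ?_ (Finset.sum_subset hsub fun e _ he => if_neg he)
    refine Eq.trans ?_ (Finset.sum_congr rfl fun e he => (if_pos he).symm)
    rw [Finset.sum_const, nsmul_eq_mul, mul_comm]
  calc probOf μ (fun r : V → D => c ≤ (forbiddenEdges G r t).card) * c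
      ≤ ∑ r : V → D, (∏ v, μ (r v)) * ((forbiddenEdges G r t).card : ℝ) := by
        rw [probOf_eq, Finset.sum_mul]
        refine Finset.sum_le_sum fun r _ => ?_
        have hn : 0 ≤ ∏ v, μ (r v) := Finset.prod_nonneg fun v _ => h0 _
        split_ifs with h
        · exact mul_le_mul_of_nonneg_left h hn
        · rw [zero_mul]; positivity
    _ ≤ _ := by
        rw [hexp, ← nsmul_eq_mul]
        exact Finset.sum_le_card_nsmul _ _ _ fun e _ =>
          probOf_mem_forbidden h0 hsum hp hp0 hdeg t e

end probability

/-! ### The theorem -/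

/-- Fix `Δ ≥ 2`. For all `ε, δ > 0` there exist a positive integer `t` and
`p > 0` such that for every probability distribution `μ` on a finite linearly ordered set
`D` with `μ {x} ≤ p` for all `x`, and every finite connected simple graph `G` with
maximum degree at most `Δ` and at least one edge: the algorithm (sample labels i.i.d.
from `μ`, form the forbidden edge set `F`, and for `k = 1, …, t` greedily augment along
vertex-disjoint `M`-augmenting paths of length `k` avoiding `F`, processed in increasing
lexicographic order of their label sequences) always outputs a matching `M` of `G`, and
with probability at least `1 − δ` this matching satisfies `|M| ≥ ν(G) / (1 + ε)`. -/
theorem stmt_11 (Δ : ℕ) (hΔ : 2 ≤ Δ) (ε δ : ℝ) (hε : 0 < ε) (hδ : 0 < δ) :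
    ∃ t : ℕ, 0 < t ∧ ∃ p : ℝ, 0 < p ∧
      ∀ (D : Type) [Fintype D] [LinearOrder D] (μ : D → ℝ),
        (∀ x, 0 ≤ μ x) → (∑ x, μ x = 1) → (∀ x, μ x ≤ p) →
        ∀ (V : Type) [Fintype V] [LinearOrder V] (G : SimpleGraph V),
          G.Connected → (∀ w : V, (G.neighborSet w).ncard ≤ Δ) →
          G.edgeSet.Nonempty →
          (∀ r : V → D,
            IsMatchingSet G (↑(algMatch G (forbiddenEdges G r t) r t) : Set (Sym2 V))) ∧
          1 - δ ≤ probOf μ (fun r : V → D =>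
            (matchingNumber G : ℝ) / (1 + ε) ≤
              (algMatch G (forbiddenEdges G r t) r t).card) := by
  -- With at most `η * ν(G)` forbidden edges, the loss is `(1 - η) * t / (t + 2)`, where
  -- `1 - η = (2 + ε) / (2 (1 + ε))` and `t / (t + 2) ≥ 2 / (2 + ε)`.
  classical
  set t := ⌈4 / ε⌉₊ with ht
  set η := ε / (2 * (1 + ε)) with hη
  set K : ℕ := (2 * (Δ + 1) ^ t) ^ 2 with hK
  have hη0 : 0 < η := by positivity
  have hΔ0 : (0 : ℝ) < Δ := by exact_mod_cast (by omega : 0 < Δ)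
  have hK0 : (0 : ℝ) < K := by rw [hK]; positivity
  have htε : 4 ≤ t * ε := by
    have := Nat.le_ceil (4 / ε)
    rw [← ht] at this
    rwa [div_le_iff₀ hε] at this
  refine ⟨t, Nat.ceil_pos.mpr (by positivity), δ * η / (2 * Δ * K), by positivity, ?_⟩
  intro D _ _ μ h0 hsum hp V _ _ G _ hdeg hE
  refine ⟨fun r => ?_, ?_⟩
  · obtain ⟨h1, h2⟩ := (algMatch_spec G (forbiddenEdges G r t) r t).1
    refine ⟨h1.trans ?_, h2⟩
    rw [SimpleGraph.edgeSet_deleteEdges]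
    exact Set.sdiff_subset
  set E : ℝ := (G.edgeFinset.card : ℝ) with hEdef
  have hE0 : 0 < E := by
    rw [hEdef]
    exact_mod_cast Finset.card_pos.mpr (SimpleGraph.edgeFinset_nonempty.mpr fun h => by
      rw [h] at hE; simp at hE)
  have hEν : E ≤ 2 * Δ * matchingNumber G := by
    rw [hEdef]; exact_mod_cast card_edges_le hdeg
  set c := η * E / (2 * Δ) with hc
  have hc0 : 0 < c := by positivity
  have hmarkov := probOf_many_forbidden h0 hsum hp (by positivity) hdeg t c
  have hbad : probOf μ (fun r : V → D => c ≤ (forbiddenEdges G r t).card) ≤ δ := by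
    refine le_of_mul_le_mul_right (hmarkov.trans (le_of_eq ?_)) hc0
    rw [← hK, ← hEdef, hc]
    field_simp
  have hcompl := probOf_compl (V := V) hsum
    (fun r : V → D => c ≤ (forbiddenEdges G r t).card)
  refine le_trans (by linarith) (probOf_mono h0 (P := fun r : V → D =>
    ¬ c ≤ (forbiddenEdges G r t).card) ?_)
  intro r hr
  have hF : ((forbiddenEdges G r t).card : ℝ) ≤ η * matchingNumber G := by
    refine (not_le.mp hr).le.trans ?_
    rw [hc, div_le_iff₀ (by positivity)]
    calc η * E ≤ η * (2 * Δ * matchingNumber G) := mul_le_mul_of_nonneg_left hEν hη0.le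
      _ = _ := by ring
  have hspec := algMatch_spec G (forbiddenEdges G r t) r t
  have happ := approx_of_noShortAug hspec.1 hspec.2
  have happ' : (t : ℝ) * matchingNumber G ≤
      (t + 2) * (algMatch G (forbiddenEdges G r t) r t).card +
        t * (forbiddenEdges G r t).card := by exact_mod_cast happ
  have h1 : (t : ℝ) * (forbiddenEdges G r t).card ≤ t * (η * matchingNumber G) :=
    mul_le_mul_of_nonneg_left hF (Nat.cast_nonneg _)
  have h2 : (t : ℝ) * (1 - η) * matchingNumber G ≤
      (t + 2) * (algMatch G (forbiddenEdges G r t) r t).card := by linarith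
  have h3 : ((t : ℝ) + 2) * (1 / (1 + ε)) ≤ t * (1 - η) := by
    have : 1 - η = (2 + ε) / (2 * (1 + ε)) := by rw [hη]; field_simp; ring
    rw [this, mul_one_div, mul_div_assoc', div_le_div_iff₀ (by positivity) (by positivity)]
    nlinarith
  have h4 : ((t : ℝ) + 2) * (matchingNumber G / (1 + ε)) ≤
      (t + 2) * (algMatch G (forbiddenEdges G r t) r t).card := by
    refine le_trans ?_ h2
    calc ((t : ℝ) + 2) * (matchingNumber G / (1 + ε))
        = ((t : ℝ) + 2) * (1 / (1 + ε)) * matchingNumber G := by ring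
      _ ≤ _ := mul_le_mul_of_nonneg_right h3 (Nat.cast_nonneg _)
  exact le_of_mul_le_mul_left h4 (by positivity)
end

section
/- Fix an integer Δ ≥ 2. For all ε > 0 and δ > 0 there exists p > 0 such that for every probability distribution μ on a finite set D ⊂ ℝ with μ({x}) ≤ p for all x ∈ D, there exist a positive integer L and GIN parameters θ with one-dimensional output such that for every finite connected simple graph G = (V,E) with maximum degree at most Δ the following holds. Sample labels (r_v)_{v∈V} i.i.d. from μ, run the GIN with input features h_v = (deg(v), r_v) to obtain outputs z_v ∈ ℝ, and set U = {v ∈ V : z_v > 0.5} ∪ {v ∈ V : there exist distinct s,t ∈ N_L(v) with r_s = r_t}. Then U is a dominating set of G for every realization of the labels, and with probability at least 1 − δ it satisfies |U| ≤ (H(Δ+1)+ε)·γ(G), where H(k) = Σ_{i=1}^{k} 1/i. -/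
/-!
The GIN simulates a parallel version of the greedy set cover algorithm for dominating sets, in
which the labels serve as a symmetry-breaking coloring. Since the network may depend on the label
set `D`, it can go through all the labels one after the other, and the radius `L = 1` suffices.

* *Algorithm* (`greedy`). Start with the set `S` of the vertices whose closed neighborhood contains
  a label collision. For `k = Δ + 1, …, 1` and for each label `x`, add to `S` all the vertices
  with label `x` whose span (the number of undominated vertices they would dominate) equals `k`.
  After phase `k` all spans are below `k` (`span_phase`), so at the end `S` is dominating
  for every realization of the labels.
* *Size* (`greedy_card`). An undominated vertex sees no collision, hence at most one of the
  vertices added simultaneously dominates it. Thus each step dominates `k` new vertices per added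
  vertex, and with the potential `∑ H(span d)` over a minimum dominating set one gets
  `|S| ≤ #collisions + H(Δ + 1) γ(G)`.
* *Probability* (`expect_collSet`, `prob_ge`). Two vertices collide with probability at most `p`,
  so the expected number of vertices seeing a collision is at most `n (Δ + 1)² p`, while
  `n ≤ (Δ + 1) γ(G)`. For `p = ε δ / (Δ + 1)³` Markov's inequality bounds this number by `ε γ(G)`
  with probability at least `1 - δ`.
* *Simulation* (`exists_gin`). Any message-passing algorithm with finitely many states is a GIN of
  width one on graphs of degree at most `Δ`: states are coded by powers of `2Δ + 2`, and with
  `1 + ε = Δ + 1` the aggregate determines the own state and the multiset of neighboring states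
  (`stEnc_inj`). It takes finitely many values, so the update is an interpolation problem on a
  finite subset of the real line, which one hidden ReLU layer solves (`exists_relu_sum`).
-/

/-- An MLP: a finite alternating composition of affine maps and the entrywise ReLU
activation `x ↦ max(x, 0)`. -/
inductive IsMLP : ∀ (a b : ℕ), ((Fin a → ℝ) → (Fin b → ℝ)) → Prop
  | affine (a b : ℕ) (W : Fin b → Fin a → ℝ) (c : Fin b → ℝ) :
      IsMLP a b (fun x i => (∑ j, W i j * x j) + c i)
  | comp (a b c : ℕ) (f : (Fin a → ℝ) → (Fin b → ℝ)) (g : (Fin b → ℝ) → (Fin c → ℝ)) :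
      IsMLP a b f → IsMLP b c g →
      IsMLP a c (fun x => g (fun i => max (f x i) 0))

/-- GIN parameters `θ`: a depth `K`, layer dimensions, MLPs `MLP_0, …, MLP_K`, and reals
`ε^(1), …, ε^(K)`; the last layer has dimension `dOut`. -/
structure GINParams (dIn dOut : ℕ) where
  K : ℕ
  dims : ℕ → ℕ
  hdims : dims K = dOut
  mlp0 : (Fin dIn → ℝ) → (Fin (dims 0) → ℝ)
  mlp : (l : ℕ) → (Fin (dims l) → ℝ) → (Fin (dims (l + 1)) → ℝ)
  eps : ℕ → ℝ
  mlp0_spec : IsMLP dIn (dims 0) mlp0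
  mlp_spec : ∀ l, IsMLP (dims l) (dims (l + 1)) (mlp l)

open Classical in
/-- The GIN layer embeddings: `z_v^(0) = MLP_0(h_v)` and
`z_v^(l) = MLP_l((1 + ε^(l)) z_v^(l−1) + ∑_{u ∈ N(v)} z_u^(l−1))`. -/
noncomputable def GINemb {dIn dOut : ℕ} (θ : GINParams dIn dOut) {V : Type} [Fintype V]
    (G : SimpleGraph V) (h : V → Fin dIn → ℝ) : (l : ℕ) → V → Fin (θ.dims l) → ℝ
  | 0 => fun v => θ.mlp0 (h v)
  | (l + 1) => fun v => θ.mlp l (fun i =>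
      (1 + θ.eps (l + 1)) * GINemb θ G h l v i +
        ∑ u ∈ G.neighborFinset v, GINemb θ G h l u i)

/-- The GIN output embeddings `z_v = z_v^(K)`. -/
noncomputable def GINout {dIn dOut : ℕ} (θ : GINParams dIn dOut) {V : Type} [Fintype V]
    (G : SimpleGraph V) (h : V → Fin dIn → ℝ) (v : V) : Fin dOut → ℝ :=
  fun i => GINemb θ G h θ.K v (Fin.cast θ.hdims.symm i)

/-- The type of level-`l` trees with labels in `A`. -/
def TreeT (A : Type) : ℕ → Type
  | 0 => A
  | (l + 1) => TreeT A l × Multiset (TreeT A l)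

open Classical in
/-- The level-`l` tree of `v` in `G` with vertex labels `a`:
`T(G, v, 0) = a_v` and `T(G, v, l) = (T(G, v, l−1), {T(G, u, l−1) : u ∈ N(v)})`
(the second component a multiset). -/
noncomputable def levelTree {V A : Type} [Fintype V] (G : SimpleGraph V) (a : V → A) :
    (l : ℕ) → V → TreeT A l
  | 0 => fun v => a v
  | (l + 1) => fun v =>
      (levelTree G a l v, (G.neighborFinset v).val.map (levelTree G a l))

/-- A dominating set of a graph `G`: every vertex either lies in `S` or is adjacent to a
vertex of `S`. -/
def IsDomSet {V : Type} (G : SimpleGraph V) (S : Set V) : Prop :=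
  ∀ v : V, v ∈ S ∨ ∃ u ∈ S, G.Adj u v

/-- `γ(G)`: the minimum cardinality of a dominating set of the finite graph `G`. -/
noncomputable def dominationNumber {V : Type} [Fintype V] (G : SimpleGraph V) : ℕ :=
  sInf {n : ℕ | ∃ S : Set V, IsDomSet G S ∧ S.ncard = n}

open Classical in
/-- The probability, when labels `r : V → A` are sampled i.i.d. from the distribution `μ`
supported on the finite set `D ⊆ A` (joint law the product measure `μ^V`), that the
predicate `P` holds of the labeling. -/
noncomputable def probOver {V A : Type} [Fintype V] (D : Finset A) (μ : A → ℝ)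
    (P : (V → A) → Prop) : ℝ :=
  ∑ r ∈ (Fintype.piFinset (fun _ : V => D)).filter P, ∏ v, μ (r v)

/-- The set `U = {v | z_v > 0.5} ∪ {v | ∃ distinct s, t ∈ N_L(v), r s = r t}`, where
`z` is the output of the GIN `θ` run on `G` with input features `h_v = (deg v, r v)`. -/
noncomputable def rginDomOutput {V : Type} [Fintype V] (θ : GINParams 2 1)
    (G : SimpleGraph V) (L : ℕ) (r : V → ℝ) : Set V :=
  {v : V | 0.5 < GINout θ G (fun u => ![((G.neighborSet u).ncard : ℝ), r u]) v 0} ∪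
    {v : V | ∃ s ∈ ballSet G v L, ∃ t ∈ ballSet G v L, s ≠ t ∧ r s = r t}


/-! ### Interpolation by one-hidden-layer ReLU networks -/

/-- A continuous piecewise linear function can take prescribed values on a finite set: when a new
largest point `a` is added, one more ReLU with its knot at the previous maximum corrects the
value at `a` without changing the values at the other points. -/
lemma exists_relu_sum (g : ℝ → ℝ) (S : Finset ℝ) :
    ∃ (b : ℕ) (t c : Fin b → ℝ) (c0 : ℝ),
      ∀ s ∈ S, (∑ i, c i * max (s - t i) 0) + c0 = g s := by
  induction S using Finset.induction_on_max with
  | empty => exact ⟨0, fun _ => 0, fun _ => 0, 0, by simp⟩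
  | insert a S ha ih =>
    obtain ⟨b, t, c, c0, h⟩ := ih
    by_cases hS : S.Nonempty
    · set m := S.max' hS with hm
      have ham : m < a := ha m (S.max'_mem hS)
      have hne : a - m ≠ 0 := (sub_pos.2 ham).ne'
      refine ⟨b + 1, Fin.cons m t,
        Fin.cons ((g a - ((∑ i, c i * max (a - t i) 0) + c0)) / (a - m)) c, c0, ?_⟩
      intro s hs
      simp only [Fin.sum_univ_succ, Fin.cons_zero, Fin.cons_succ]
      rcases Finset.mem_insert.1 hs with rfl | hs
      · rw [max_eq_left (sub_pos.2 ham).le, div_mul_cancel₀ _ hne]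
        ring
      · rw [max_eq_right (sub_nonpos.2 (S.le_max' s hs)), mul_zero, zero_add, h s hs]
    · rw [Finset.not_nonempty_iff_eq_empty] at hS
      subst hS
      exact ⟨0, fun _ => 0, fun _ => 0, g a, by simp⟩

/-- An MLP can compute any function of a linear form `w` on the inputs where `w` takes values in a
given finite set. -/
lemma exists_mlp (a : ℕ) (w : Fin a → ℝ) (g : ℝ → ℝ) (S : Finset ℝ) :
    ∃ f : (Fin a → ℝ) → (Fin 1 → ℝ), IsMLP a 1 f ∧
      ∀ x, (∑ j, w j * x j) ∈ S → ∀ i, f x i = g (∑ j, w j * x j) := by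
  obtain ⟨b, t, c, c0, h⟩ := exists_relu_sum g S
  refine ⟨_, .comp a b 1 _ _ (.affine a b (fun _ => w) (fun i => - t i))
    (.affine b 1 (fun _ => c) (fun _ => c0)), ?_⟩
  intro x hx i
  simpa [sub_eq_add_neg] using h _ hx

/-! ### Simulating finite-state message passing by a GIN -/

section Simulation

open Classical

/-- A synchronous message-passing algorithm with state set `Q`: in round `l` a vertex updates its
state through `upd l` from its own state and the multiset of states of its neighbors. -/
noncomputable def mpState {Q V : Type} [Fintype V] (G : SimpleGraph V) (start : V → Q)
    (upd : ℕ → Q → Multiset Q → Q) : ℕ → V → Q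
  | 0 => start
  | (l + 1) => fun v => upd l (mpState G start upd l v)
      ((G.neighborFinset v).val.map (mpState G start upd l))

lemma mpState_succ {Q V : Type} [Fintype V] (G : SimpleGraph V) (start : V → Q)
    (upd : ℕ → Q → Multiset Q → Q) (l : ℕ) (v : V) :
    mpState G start upd (l + 1) v = upd l (mpState G start upd l v)
      ((G.neighborFinset v).val.map (mpState G start upd l)) := rfl

/-- The code of a state: a power of `2Δ + 2`, so that a sum of at most `2Δ + 1` codes determines
its summands through its digits in base `2Δ + 2`. -/
noncomputable def stCode {Q : Type} [Fintype Q] (Δ : ℕ) (q : Q) : ℕ :=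
  (2 * Δ + 2) ^ (Fintype.equivFin Q q : ℕ)

/-- The aggregate which a GIN layer with `1 + ε = Δ + 1` forms from the code of the own state `q`
and the codes of the multiset `m` of neighboring states. -/
noncomputable def stEnc {Q : Type} [Fintype Q] (Δ : ℕ) (q : Q) (m : Multiset Q) : ℕ :=
  (Δ + 1) * stCode Δ q + (m.map (stCode Δ)).sum

/-- The digits of `stEnc Δ q m` in base `2Δ + 2`. -/
noncomputable def stDig {Q : Type} (Δ : ℕ) (q : Q) (m : Multiset Q) (x : Q) : ℕ :=
  m.count x + if x = q then Δ + 1 else 0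

lemma stDig_lt {Q : Type} {Δ : ℕ} {q : Q} {m : Multiset Q} (hm : m.card ≤ Δ) (x : Q) :
    stDig Δ q m x < 2 * Δ + 2 := by
  have := m.count_le_card x
  unfold stDig
  split_ifs <;> omega

lemma stEnc_eq {Q : Type} [Fintype Q] {Δ : ℕ} {q : Q} {m : Multiset Q} (hm : m.card ≤ Δ) :
    stEnc Δ q m = (finFunctionFinEquiv (fun i : Fin (Fintype.card Q) =>
      (⟨stDig Δ q m ((Fintype.equivFin Q).symm i), stDig_lt hm _⟩ : Fin (2 * Δ + 2))) : ℕ) := by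
  rw [finFunctionFinEquiv_apply]
  rw [← Equiv.sum_comp (Fintype.equivFin Q)]
  simp only [Equiv.symm_apply_apply, stDig, add_mul, ite_mul, zero_mul]
  rw [Finset.sum_add_distrib, Finset.sum_ite_eq' Finset.univ q, if_pos (Finset.mem_univ _),
    stEnc, Finset.sum_multiset_map_count, add_comm]
  refine congrArg₂ (· + ·) ?_ (add_mul _ _ _)
  refine Finset.sum_subset_zero_on_sdiff (Finset.subset_univ _) ?_ ?_
  · intro x hx
    simp only [Finset.mem_sdiff, Multiset.mem_toFinset] at hx
    simp [Multiset.count_eq_zero.2 hx.2]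
  · intro x _
    simp [stCode]

/-- The digit of `stEnc Δ q m` at the own state `q` is larger than `Δ`, all the others are at most
`Δ`; so the digits reveal `q`, and then the multiplicities in `m`. -/
lemma stEnc_inj {Q : Type} [Fintype Q] {Δ : ℕ} {q q' : Q} {m m' : Multiset Q}
    (hm : m.card ≤ Δ) (hm' : m'.card ≤ Δ) (h : stEnc Δ q m = stEnc Δ q' m') :
    q = q' ∧ m = m' := by
  rw [stEnc_eq hm, stEnc_eq hm'] at h
  have h2 := finFunctionFinEquiv.injective (Fin.ext h)
  have h3 : ∀ x, stDig Δ q m x = stDig Δ q' m' x := fun x => by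
    simpa using congrArg Fin.val (congrFun h2 (Fintype.equivFin Q x))
  have hq : q = q' := by
    by_contra hne
    have h4 := h3 q
    have := m'.count_le_card q
    simp only [stDig, if_true, if_neg hne] at h4
    omega
  refine ⟨hq, Multiset.ext.2 fun x => ?_⟩
  have h4 := h3 x
  subst hq
  simpa [stDig] using h4

/-- One GIN layer can compute any function of the own state and the multiset of at most `Δ`
neighboring states. -/
lemma exists_layer {Q : Type} [Fintype Q] (Δ : ℕ) (tgt : Q → Multiset Q → ℝ) :
    ∃ f : (Fin 1 → ℝ) → (Fin 1 → ℝ), IsMLP 1 1 f ∧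
      ∀ q m, m.card ≤ Δ → ∀ x : Fin 1 → ℝ, x 0 = stEnc Δ q m → ∀ i, f x i = tgt q m := by
  obtain ⟨f, hf, h⟩ := exists_mlp 1 (fun _ => 1)
    (fun y => if h : ∃ qm : Q × Multiset Q, qm.2.card ≤ Δ ∧ y = stEnc Δ qm.1 qm.2
      then tgt h.choose.1 h.choose.2 else 0)
    ((Finset.range ((2 * Δ + 2) ^ Fintype.card Q)).image (fun n : ℕ => (n : ℝ)))
  refine ⟨f, hf, fun q m hm x hx i => ?_⟩
  have hlt : stEnc Δ q m < (2 * Δ + 2) ^ Fintype.card Q := by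
    rw [stEnc_eq hm]; exact Fin.is_lt _
  have hs : ∑ j, (1 : ℝ) * x j = stEnc Δ q m := by simp [hx]
  rw [h x (by rw [hs]; exact Finset.mem_image_of_mem _ (Finset.mem_range.2 hlt)), hs]
  have hex : ∃ qm : Q × Multiset Q, qm.2.card ≤ Δ ∧
      (stEnc Δ q m : ℝ) = stEnc Δ qm.1 qm.2 := ⟨(q, m), hm, rfl⟩
  rw [dif_pos hex]
  obtain ⟨h1, h2⟩ := stEnc_inj (q' := hex.choose.1) (m' := hex.choose.2) hm
    hex.choose_spec.1 (by exact_mod_cast hex.choose_spec.2)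
  exact congrArg₂ tgt h1.symm h2.symm

/-- Any finite-state message-passing algorithm started from vertex labels in a finite set is
computed by a GIN, all of whose layers are one-dimensional, on graphs of degree at most `Δ`. -/
lemma exists_gin {Q : Type} [Fintype Q] (Δ : ℕ) (D : Finset ℝ) (start : D → Q)
    (upd : ℕ → Q → Multiset Q → Q) (out : Q → Prop) (T : ℕ) :
    ∃ θ : GINParams 2 1, ∀ (V : Type) [Fintype V] (G : SimpleGraph V) (a : V → D),
      (∀ w : V, (G.neighborSet w).ncard ≤ Δ) → ∀ v,
      (0.5 < GINout θ G (fun u => ![((G.neighborSet u).ncard : ℝ), (a u : ℝ)]) v 0 ↔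
        out (mpState G (fun u => start (a u)) upd T v)) := by
  obtain ⟨f0, hf0, h0⟩ := exists_mlp 2 ![0, 1]
    (fun y => if h : y ∈ D then (stCode Δ (start ⟨y, h⟩) : ℝ) else 0) D
  have hl := fun l : ℕ => exists_layer Δ (fun (q : Q) m =>
    if l = T then (if out q then (1 : ℝ) else 0) else (stCode Δ (upd l q m) : ℝ))
  choose f hf h using hl
  -- After `T` rounds that output codes, one more layer outputs the indicator of `out`.
  refine ⟨⟨T + 1, fun _ => 1, rfl, f0, f, fun _ => Δ, hf0, hf⟩, ?_⟩
  intro V _ G a hdeg v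
  set θ : GINParams 2 1 := ⟨T + 1, fun _ => 1, rfl, f0, f, fun _ => Δ, hf0, hf⟩ with hθ
  set hfeat : V → Fin 2 → ℝ := fun u => ![((G.neighborSet u).ncard : ℝ), (a u : ℝ)]
  set st := mpState G (fun u => start (a u)) upd with hst
  have hcard : ∀ l v, ((G.neighborFinset v).val.map (st l)).card ≤ Δ := by
    intro l v
    rw [Multiset.card_map]
    have := hdeg v
    rwa [Set.ncard_eq_toFinset_card'] at this
  -- The value fed into the MLP of layer `l + 1` when all embeddings at level `l` are codes.
  have hagg : ∀ l, (∀ v (i : Fin 1), GINemb θ G hfeat l v i = stCode Δ (st l v)) → ∀ v,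
      (1 + (Δ : ℝ)) * GINemb θ G hfeat l v (0 : Fin 1) +
        ∑ u ∈ G.neighborFinset v, GINemb θ G hfeat l u (0 : Fin 1) =
      stEnc Δ (st l v) ((G.neighborFinset v).val.map (st l)) := by
    intro l hl v
    have hsum : (((G.neighborFinset v).val.map (st l)).map (stCode Δ)).sum =
        ∑ u ∈ G.neighborFinset v, stCode Δ (st l u) := by
      rw [Multiset.map_map]
      rfl
    simp only [hl, stEnc, hsum]
    push_cast
    rw [add_comm (1 : ℝ)]
  have hcode : ∀ l ≤ T, ∀ v (i : Fin 1), GINemb θ G hfeat l v i = stCode Δ (st l v) := by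
    intro l
    induction l with
    | zero =>
      intro _ v i
      refine (h0 (hfeat v) (by simp [hfeat]) i).trans ?_
      simp [hfeat, st, mpState]
    | succ l ih =>
      intro hlT v i
      have hne : l ≠ T := by omega
      have := h l (st l v) _ (hcard l v)
        (fun j => (1 + (Δ : ℝ)) * GINemb θ G hfeat l v j +
          ∑ u ∈ G.neighborFinset v, GINemb θ G hfeat l u j) (hagg l (ih (by omega)) v) i
      rw [if_neg hne] at this
      exact this
  have hfin := h T (st T v) _ (hcard T v)
    (fun j => (1 + (Δ : ℝ)) * GINemb θ G hfeat T v j +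
      ∑ u ∈ G.neighborFinset v, GINemb θ G hfeat T u j) (hagg T (hcode T le_rfl) v) 0
  rw [if_pos rfl] at hfin
  have : GINout θ G hfeat v 0 = if out (st T v) then (1 : ℝ) else 0 := hfin
  rw [this]
  split_ifs with ho <;> norm_num [ho]

end Simulation

/-! ### The parallel greedy algorithm -/

section Greedy

open Classical

/-- The closed neighborhood of `v`. -/
noncomputable def clN {V : Type} [Fintype V] (G : SimpleGraph V) (v : V) : Finset V :=
  insert v (G.neighborFinset v)

/-- The vertices whose closed neighborhood contains two distinct vertices with equal labels. -/
noncomputable def collSet {V α : Type} [Fintype V] (G : SimpleGraph V) (a : V → α) : Finset V :=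
  Finset.univ.filter fun w => ∃ s ∈ clN G w, ∃ t ∈ clN G w, s ≠ t ∧ a s = a t

/-- `w` is dominated by `S`. -/
def IsCov {V : Type} [Fintype V] (G : SimpleGraph V) (S : Finset V) (w : V) : Prop :=
  ∃ u ∈ clN G w, u ∈ S

/-- The span of `v`: the number of vertices which are not dominated by `S` and would become
dominated if `v` were added to `S`. -/
noncomputable def spanOf {V : Type} [Fintype V] (G : SimpleGraph V) (S : Finset V) (v : V) : ℕ :=
  ((clN G v).filter fun w => ¬ IsCov G S w).card

/-- The parallel greedy algorithm: it starts with the vertices that see a label collision, and at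
time `t = i * B + j` with `j < B` it adds all the vertices with label `col j` whose span is the
currently maximal possible value `Δ + 1 - i`. -/
noncomputable def greedy {V α : Type} [Fintype V] (G : SimpleGraph V) (a : V → α) (Δ B : ℕ)
    (col : ℕ → α) : ℕ → Finset V
  | 0 => collSet G a
  | (t + 1) => greedy G a Δ B col t ∪ Finset.univ.filter fun v =>
      a v = col (t % B) ∧ spanOf G (greedy G a Δ B col t) v = Δ + 1 - t / B

/-- The harmonic number `H(n)`. -/
noncomputable def harm (n : ℕ) : ℝ := ∑ i ∈ Finset.range n, (1 : ℝ) / (i + 1)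

lemma harm_mono {m n : ℕ} (h : m ≤ n) : harm m ≤ harm n :=
  Finset.sum_le_sum_of_subset_of_nonneg (Finset.range_mono h) fun i _ _ => by positivity

lemma harm_nonneg (n : ℕ) : 0 ≤ harm n := Finset.sum_nonneg fun i _ => by positivity

/-- Each of the `n` terms in between is at least `1 / k`. -/
lemma harm_sub {b n k : ℕ} (h : b + n ≤ k) : (n : ℝ) / k ≤ harm (b + n) - harm b := by
  rw [harm, harm, Finset.sum_range_add, add_sub_cancel_left]
  have : (n : ℝ) / k = ∑ _i ∈ Finset.range n, (1 : ℝ) / k := by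
    rw [Finset.sum_const, Finset.card_range, nsmul_eq_mul, mul_one_div]
  rw [this]
  refine Finset.sum_le_sum fun i hi => one_div_le_one_div_of_le (by positivity) ?_
  have := Finset.mem_range.1 hi
  exact_mod_cast (by omega : b + i + 1 ≤ k)

variable {V α : Type} [Fintype V] {G : SimpleGraph V} {a : V → α} {Δ B : ℕ} {col : ℕ → α}

lemma mem_clN {u v : V} : u ∈ clN G v ↔ u = v ∨ G.Adj v u := by
  simp [clN]

lemma mem_clN_comm {u v : V} : u ∈ clN G v ↔ v ∈ clN G u := by
  rw [mem_clN, mem_clN, G.adj_comm, eq_comm]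

lemma mem_collSet {w : V} :
    w ∈ collSet G a ↔ ∃ s ∈ clN G w, ∃ t ∈ clN G w, s ≠ t ∧ a s = a t := by
  simp [collSet]

lemma card_clN (hdeg : ∀ w : V, (G.neighborSet w).ncard ≤ Δ) (v : V) :
    (clN G v).card ≤ Δ + 1 := by
  have := hdeg v
  rw [Set.ncard_eq_toFinset_card'] at this
  exact (Finset.card_insert_le _ _).trans (Nat.succ_le_succ this)

lemma IsCov.mono {S S' : Finset V} (h : S ⊆ S') {w : V} (hw : IsCov G S w) : IsCov G S' w :=
  let ⟨u, hu, huS⟩ := hw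
  ⟨u, hu, h huS⟩

lemma spanOf_anti {S S' : Finset V} (h : S ⊆ S') (v : V) : spanOf G S' v ≤ spanOf G S v :=
  Finset.card_le_card (Finset.monotone_filter_right _ fun _ _ hw hc => hw (hc.mono h))

lemma spanOf_eq_zero {S : Finset V} {v : V} (h : v ∈ S) : spanOf G S v = 0 := by
  rw [spanOf, Finset.card_eq_zero, Finset.filter_eq_empty_iff]
  exact fun w hw hc => hc ⟨v, mem_clN_comm.1 hw, h⟩

lemma greedy_mono {s t : ℕ} (h : s ≤ t) : greedy G a Δ B col s ⊆ greedy G a Δ B col t := by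
  induction t, h using Nat.le_induction with
  | base => exact subset_rfl
  | succ t _ ih => exact ih.trans Finset.subset_union_left

/-- When each label gets its turn in every phase, no vertex has span above `Δ + 1 - i` after `i`
phases. -/
lemma span_phase (hdeg : ∀ w : V, (G.neighborSet w).ncard ≤ Δ)
    (hcol : ∀ x, ∃ i < B, col i = x) (i : ℕ) (hi : i ≤ Δ + 1) (v : V) :
    spanOf G (greedy G a Δ B col (i * B)) v ≤ Δ + 1 - i := by
  induction i with
  | zero => exact (Finset.card_filter_le _ _).trans (card_clN hdeg v)
  | succ i ih =>
    have ih := ih (by omega)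
    obtain ⟨j, hj, hjv⟩ := hcol (a v)
    have hmod : (i * B + j) % B = j := by
      rw [mul_comm, Nat.mul_add_mod, Nat.mod_eq_of_lt hj]
    have hdiv : (i * B + j) / B = i := by
      rw [mul_comm, Nat.mul_add_div (by omega), Nat.div_eq_of_lt hj, add_zero]
    have h1 := (spanOf_anti (G := G) (greedy_mono (G := G) (a := a) (Δ := Δ) (B := B) (col := col)
      (Nat.le_add_right (i * B) j)) v).trans ih
    have h2 : i * B + j + 1 ≤ (i + 1) * B := by
      rw [add_mul, one_mul]; omega
    have h3 := spanOf_anti (G := G) (greedy_mono (G := G) (a := a) (Δ := Δ) (B := B) (col := col)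
      h2) v
    by_cases heq : spanOf G (greedy G a Δ B col (i * B + j)) v = Δ + 1 - i
    · have : v ∈ greedy G a Δ B col (i * B + j + 1) := by
        rw [greedy, Finset.mem_union, Finset.mem_filter, hmod, hdiv]
        exact Or.inr ⟨Finset.mem_univ _, hjv.symm, heq⟩
      rw [spanOf_eq_zero this] at h3
      omega
    · have h4 := spanOf_anti (G := G) (greedy_mono (G := G) (a := a) (Δ := Δ) (B := B)
        (col := col) (Nat.le_succ (i * B + j))) v
      simp only [Nat.succ_eq_add_one] at h4
      omega

/-- After the last phase all spans are zero, that is, every vertex is dominated. -/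
lemma greedy_dom (hdeg : ∀ w : V, (G.neighborSet w).ncard ≤ Δ)
    (hcol : ∀ x, ∃ i < B, col i = x) :
    IsDomSet G (greedy G a Δ B col ((Δ + 1) * B) : Set V) := by
  intro v
  have h := span_phase (a := a) hdeg hcol (Δ + 1) le_rfl v
  rw [Nat.sub_self, Nat.le_zero, spanOf, Finset.card_eq_zero, Finset.filter_eq_empty_iff] at h
  obtain ⟨u, hu, huS⟩ := not_not.1 (h (mem_clN.2 (Or.inl rfl) : v ∈ clN G v))
  rcases mem_clN.1 hu with rfl | hadj
  · exact Or.inl huS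
  · exact Or.inr ⟨u, huS, hadj.symm⟩

/-- The potential of greedy set cover analysis relative to a dominating set `S₀`. -/
noncomputable def pot (G : SimpleGraph V) (S₀ S : Finset V) : ℝ :=
  ∑ d ∈ S₀, harm (spanOf G S d)

/-- In one step the number of added vertices is at most the drop of the potential. The vertices
that become dominated have collision-free closed neighborhoods, so each of them is dominated by
only one of the new vertices; hence `k` times the number of new vertices is at most the number of
newly dominated ones, `k` being the current span. -/
lemma step_card (hdeg : ∀ w : V, (G.neighborSet w).ncard ≤ Δ)
    (hcol : ∀ x, ∃ i < B, col i = x) {S₀ : Finset V} (hS₀ : IsDomSet G (S₀ : Set V))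
    (t : ℕ) (ht : t < (Δ + 1) * B) :
    ((greedy G a Δ B col (t + 1)).card : ℝ) + pot G S₀ (greedy G a Δ B col (t + 1)) ≤
      (greedy G a Δ B col t).card + pot G S₀ (greedy G a Δ B col t) := by
  set S := greedy G a Δ B col t with hS
  set S' := greedy G a Δ B col (t + 1) with hS'
  set k := Δ + 1 - t / B with hk
  have hB : 0 < B := Nat.pos_of_ne_zero fun h => by simp [h] at ht
  have hdiv : t / B < Δ + 1 := (Nat.div_lt_iff_lt_mul hB).2 ht
  have hk0 : 0 < k := by omega
  have hSS' : S ⊆ S' := greedy_mono (Nat.le_succ t)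
  have hspan : ∀ v, spanOf G S v ≤ k := fun v =>
    (spanOf_anti (greedy_mono (Nat.div_mul_le_self t B)) v).trans
      (span_phase hdeg hcol (t / B) hdiv.le v)
  set J := S' \ S with hJ
  have hJmem : ∀ v ∈ J, a v = col (t % B) ∧ spanOf G S v = k := by
    intro v hv
    obtain ⟨h1, h2⟩ := Finset.mem_sdiff.1 hv
    rw [hS', greedy, Finset.mem_union, Finset.mem_filter] at h1
    exact (h1.resolve_left h2).2
  set N := Finset.univ.filter fun w => IsCov G S' w ∧ ¬ IsCov G S w with hN
  have hlow : J.card * k ≤ N.card := by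
    have hsub : J.biUnion (fun v => (clN G v).filter fun w => ¬ IsCov G S w) ⊆ N := by
      intro w hw
      obtain ⟨v, hv, hw⟩ := Finset.mem_biUnion.1 hw
      obtain ⟨hw1, hw2⟩ := Finset.mem_filter.1 hw
      exact Finset.mem_filter.2 ⟨Finset.mem_univ _,
        ⟨v, mem_clN_comm.1 hw1, (Finset.mem_sdiff.1 hv).1⟩, hw2⟩
    refine le_trans (le_of_eq ?_) (Finset.card_le_card hsub)
    rw [Finset.card_biUnion]
    · exact (Finset.sum_const_nat fun v hv => (hJmem v hv).2).symm
    · intro u hu v hv huv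
      rw [Function.onFun, Finset.disjoint_left]
      intro w hwu hwv
      obtain ⟨hwu, hnc⟩ := Finset.mem_filter.1 hwu
      have hwv := (Finset.mem_filter.1 hwv).1
      refine hnc ⟨w, mem_clN.2 (Or.inl rfl), greedy_mono (Nat.zero_le t) ?_⟩
      exact mem_collSet.2 ⟨u, mem_clN_comm.1 hwu, v, mem_clN_comm.1 hwv, huv,
        (hJmem u hu).1.trans (hJmem v hv).1.symm⟩
  have hup : N.card ≤ ∑ d ∈ S₀, (spanOf G S d - spanOf G S' d) := by
    have hsub : N ⊆ S₀.biUnion fun d => ((clN G d).filter fun w => ¬ IsCov G S w) \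
        ((clN G d).filter fun w => ¬ IsCov G S' w) := by
      intro w hw
      obtain ⟨-, hw1, hw2⟩ := Finset.mem_filter.1 hw
      obtain ⟨d, hd, hdw⟩ : ∃ d ∈ S₀, w ∈ clN G d := by
        rcases hS₀ w with h | ⟨u, hu, huw⟩
        · exact ⟨w, h, mem_clN.2 (Or.inl rfl)⟩
        · exact ⟨u, hu, mem_clN.2 (Or.inr huw)⟩
      refine Finset.mem_biUnion.2 ⟨d, hd, ?_⟩
      simp [hdw, hw1, hw2]
    refine (Finset.card_le_card hsub).trans (Finset.card_biUnion_le.trans (le_of_eq ?_))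
    refine Finset.sum_congr rfl fun d _ => ?_
    rw [Finset.card_sdiff_of_subset
      (Finset.monotone_filter_right _ fun _ _ hw hc => hw (hc.mono hSS'))]
    rfl
  have hpot : ((∑ d ∈ S₀, (spanOf G S d - spanOf G S' d) : ℕ) : ℝ) / k ≤
      pot G S₀ S - pot G S₀ S' := by
    rw [pot, pot, ← Finset.sum_sub_distrib, Nat.cast_sum, Finset.sum_div]
    refine Finset.sum_le_sum fun d _ => ?_
    have h1 := spanOf_anti (G := G) hSS' d
    have h2 := harm_sub (b := spanOf G S' d) (n := spanOf G S d - spanOf G S' d) (k := k)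
      (by have := hspan d; omega)
    rwa [Nat.add_sub_cancel' h1] at h2
  have hJk : (J.card : ℝ) ≤ pot G S₀ S - pot G S₀ S' := by
    refine le_trans ?_ hpot
    rw [le_div_iff₀ (by exact_mod_cast hk0)]
    exact_mod_cast hlow.trans hup
  have hcard : (S'.card : ℝ) = J.card + S.card := by
    exact_mod_cast (Finset.card_sdiff_add_card_eq_card hSS').symm
  linarith

/-- Summing `step_card` over all steps: the initial potential relative to a minimum dominating
set is at most `H(Δ + 1) γ(G)`. -/
lemma greedy_card (hdeg : ∀ w : V, (G.neighborSet w).ncard ≤ Δ)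
    (hcol : ∀ x, ∃ i < B, col i = x) :
    ((greedy G a Δ B col ((Δ + 1) * B)).card : ℝ) ≤
      (collSet G a).card + harm (Δ + 1) * dominationNumber G := by
  obtain ⟨S₀, hS₀, hcard⟩ : dominationNumber G ∈
      {n : ℕ | ∃ S : Set V, IsDomSet G S ∧ S.ncard = n} :=
    Nat.sInf_mem ⟨_, Set.univ, fun v => Or.inl trivial, rfl⟩
  have hS₀' : IsDomSet G (S₀.toFinset : Set V) := by simpa using hS₀
  have key : ∀ t ≤ (Δ + 1) * B,
      ((greedy G a Δ B col t).card : ℝ) + pot G S₀.toFinset (greedy G a Δ B col t) ≤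
      (collSet G a).card + pot G S₀.toFinset (collSet G a) := by
    intro t
    induction t with
    | zero => exact fun _ => le_rfl
    | succ t ih => exact fun h => (step_card hdeg hcol hS₀' t h).trans (ih (by omega))
  have h1 := key _ le_rfl
  have h2 : 0 ≤ pot G S₀.toFinset (greedy G a Δ B col ((Δ + 1) * B)) :=
    Finset.sum_nonneg fun _ _ => harm_nonneg _
  have h3 : pot G S₀.toFinset (collSet G a) ≤ harm (Δ + 1) * dominationNumber G := by
    refine (Finset.sum_le_card_nsmul _ _ (harm (Δ + 1)) fun d _ =>
      harm_mono ((Finset.card_filter_le _ _).trans (card_clN hdeg d))).trans (le_of_eq ?_)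
    rw [nsmul_eq_mul, mul_comm, ← hcard, Set.ncard_eq_toFinset_card']
  linarith

/-- A vertex dominates at most `Δ + 1` vertices. -/
lemma card_le_dominationNumber (hdeg : ∀ w : V, (G.neighborSet w).ncard ≤ Δ) :
    Fintype.card V ≤ dominationNumber G * (Δ + 1) := by
  obtain ⟨S₀, hS₀, hcard⟩ : dominationNumber G ∈
      {n : ℕ | ∃ S : Set V, IsDomSet G S ∧ S.ncard = n} :=
    Nat.sInf_mem ⟨_, Set.univ, fun v => Or.inl trivial, rfl⟩
  have hsub : (Finset.univ : Finset V) ⊆ S₀.toFinset.biUnion (clN G) := by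
    intro w _
    rcases hS₀ w with h | ⟨u, hu, huw⟩
    · exact Finset.mem_biUnion.2 ⟨w, by simpa using h, mem_clN.2 (Or.inl rfl)⟩
    · exact Finset.mem_biUnion.2 ⟨u, by simpa using hu, mem_clN.2 (Or.inr huw)⟩
  refine (Finset.card_le_card hsub).trans ?_
  rw [← hcard, Set.ncard_eq_toFinset_card']
  exact Finset.card_biUnion_le_card_mul _ _ _ fun d _ => card_clN hdeg d

end Greedy

/-! ### The greedy algorithm as finite-state message passing -/

section GreedyMP

open Classical

/-- The update rule of the greedy algorithm. A state `(x, joined, aux)` consists of the label, the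
membership in the current set, and a flag for being dominated by it. The first round detects
label collisions in closed neighborhoods; after it, rounds of two kinds alternate: one computes
the flags `aux`, the next one uses them to count the span and to decide who joins. -/
noncomputable def gUpd {α : Type} (Δ B : ℕ) (col : ℕ → α) :
    ℕ → α × Bool × Bool → Multiset (α × Bool × Bool) → α × Bool × Bool
  | 0, q, m => (q.1, decide (¬ ((q ::ₘ m).map Prod.fst).Nodup), false)
  | (l + 1), q, m =>
    if l % 2 = 0 then (q.1, q.2.1, decide (∃ x ∈ q ::ₘ m, x.2.1 = true))
    else (q.1, decide (q.2.1 = true ∨ (q.1 = col (l / 2 % B) ∧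
      (q ::ₘ m).countP (fun x => ¬ x.2.2 = true) = Δ + 1 - l / 2 / B)), false)

lemma gUpd_zero {α : Type} (Δ B : ℕ) (col : ℕ → α) (q : α × Bool × Bool)
    (m : Multiset (α × Bool × Bool)) :
    gUpd Δ B col 0 q m = (q.1, decide (¬ ((q ::ₘ m).map Prod.fst).Nodup), false) := rfl

lemma gUpd_succ {α : Type} (Δ B : ℕ) (col : ℕ → α) (l : ℕ) (q : α × Bool × Bool)
    (m : Multiset (α × Bool × Bool)) :
    gUpd Δ B col (l + 1) q m =
      if l % 2 = 0 then (q.1, q.2.1, decide (∃ x ∈ q ::ₘ m, x.2.1 = true))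
      else (q.1, decide (q.2.1 = true ∨ (q.1 = col (l / 2 % B) ∧
        (q ::ₘ m).countP (fun x => ¬ x.2.2 = true) = Δ + 1 - l / 2 / B)), false) := rfl

variable {V α : Type} [Fintype V] {G : SimpleGraph V} {a : V → α} {Δ B : ℕ} {col : ℕ → α}

lemma cons_map_neighbors {Q : Type} (st : V → Q) (v : V) :
    st v ::ₘ (G.neighborFinset v).val.map st = (clN G v).val.map st := by
  rw [clN, Finset.insert_val_of_notMem (by simp), Multiset.map_cons]

lemma mpState_cov {t : ℕ}
    (h : ∀ v, mpState G (fun v => (a v, false, false)) (gUpd Δ B col) (2 * t + 1) v =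
      (a v, decide (v ∈ greedy G a Δ B col t), false)) (v : V) :
    mpState G (fun v => (a v, false, false)) (gUpd Δ B col) (2 * t + 2) v =
      (a v, decide (v ∈ greedy G a Δ B col t), decide (IsCov G (greedy G a Δ B col t) v)) := by
  rw [mpState_succ, gUpd_succ, if_pos (by omega), cons_map_neighbors]
  simp only [h, Multiset.mem_map, Finset.mem_val, Prod.mk.injEq, true_and]
  refine decide_eq_decide.2 ?_
  simp [IsCov]

/-- After round `2t + 1` the simulated set is the greedy set at time `t`. -/
lemma mpState_greedy (t : ℕ) : ∀ v,
    mpState G (fun v => (a v, false, false)) (gUpd Δ B col) (2 * t + 1) v =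
      (a v, decide (v ∈ greedy G a Δ B col t), false) := by
  induction t with
  | zero =>
    intro v
    rw [mul_zero, zero_add, mpState_succ, gUpd_zero, cons_map_neighbors, Multiset.map_map]
    have : (Multiset.map (Prod.fst ∘ mpState G (fun v => (a v, false, false))
        (gUpd Δ B col) 0) (clN G v).val).Nodup ↔ v ∉ collSet G a := by
      change (Multiset.map a (clN G v).val).Nodup ↔ _
      rw [Multiset.nodup_map_iff_inj_on (clN G v).nodup, mem_collSet]
      simp only [Finset.mem_val]
      grind
    simp only [this, not_not, greedy]
    rfl
  | succ t ih =>
    intro v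
    have h := mpState_cov ih
    have hspan : Multiset.countP (fun x : α × Bool × Bool => ¬ x.2.2 = true)
        (Multiset.map (mpState G (fun v => (a v, false, false)) (gUpd Δ B col) (2 * t + 1 + 1))
          (clN G v).val) = spanOf G (greedy G a Δ B col t) v := by
      rw [Multiset.countP_map, spanOf, Finset.card_def, Finset.filter_val]
      simp [h]
    rw [show 2 * (t + 1) + 1 = (2 * t + 1 + 1) + 1 by ring, mpState_succ, gUpd_succ, if_neg (by omega),
      cons_map_neighbors, hspan, h, show (2 * t + 1) / 2 = t by omega]
    simp [greedy]

end GreedyMP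

/-! ### Label collisions are rare -/

section Probability

open Classical

variable {V : Type} [Fintype V] {D : Finset ℝ} {μ : ℝ → ℝ} {p : ℝ}

lemma sum_weight (hsum : ∑ z ∈ D, μ z = 1) :
    ∑ r ∈ Fintype.piFinset (fun _ : V => D), ∏ v, μ (r v) = 1 := by
  rw [← Finset.prod_univ_sum (fun _ : V => D) (fun _ => μ)]
  simp [hsum]

/-- Two given vertices receive the same label with probability `∑ μ(x)² ≤ max μ`. -/
lemma prob_pair (hμ : ∀ z, 0 ≤ μ z) (hsum : ∑ z ∈ D, μ z = 1) (hp : ∀ z ∈ D, μ z ≤ p)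
    {s t : V} (hst : s ≠ t) :
    ∑ r ∈ Fintype.piFinset (fun _ : V => D), (∏ v, μ (r v)) * (if r s = r t then 1 else 0) ≤ p := by
  -- `∏ v, g x v (r v)` is the weight of `r` if `r s = r t = x`, and zero otherwise.
  set g : ℝ → V → ℝ → ℝ := fun x v y =>
    if v ∈ ({s, t} : Finset V) then (if y = x then μ y else 0) else μ y with hg
  have hg0 : ∀ x v y, 0 ≤ g x v y := by
    intro x v y
    simp only [hg]
    split_ifs <;> first | exact hμ _ | exact le_rfl
  have h1 : ∀ r ∈ Fintype.piFinset (fun _ : V => D),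
      (∏ v, μ (r v)) * (if r s = r t then 1 else 0) ≤ ∑ x ∈ D, ∏ v, g x v (r v) := by
    intro r hr
    have hnn : ∀ x ∈ D, 0 ≤ ∏ v, g x v (r v) := fun x _ =>
      Finset.prod_nonneg fun v _ => hg0 _ _ _
    split_ifs with h
    · rw [mul_one]
      refine le_trans (le_of_eq ?_)
        (Finset.single_le_sum hnn (Fintype.mem_piFinset.1 hr s))
      refine Finset.prod_congr rfl fun v _ => ?_
      simp only [hg]
      split_ifs with h2 h3
      · rfl
      · rcases Finset.mem_insert.1 h2 with rfl | h2
        · exact absurd rfl h3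
        · rw [Finset.mem_singleton.1 h2] at h3
          exact absurd h.symm h3
      · rfl
    · rw [mul_zero]
      exact Finset.sum_nonneg hnn
  have h2 : ∀ x ∈ D, ∑ r ∈ Fintype.piFinset (fun _ : V => D), ∏ v, g x v (r v) = μ x * μ x := by
    intro x hx
    rw [← Finset.prod_univ_sum (fun _ : V => D) (g x)]
    have : ∀ v, ∑ y ∈ D, g x v y = if v ∈ ({s, t} : Finset V) then μ x else 1 := by
      intro v
      simp only [hg]
      split_ifs
      · simp [hx]
      · exact hsum
    simp only [this]
    rw [Finset.prod_ite_mem, Finset.univ_inter, Finset.prod_pair hst]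
  calc
    _ ≤ ∑ r ∈ Fintype.piFinset (fun _ : V => D), ∑ x ∈ D, ∏ v, g x v (r v) :=
        Finset.sum_le_sum h1
    _ = ∑ x ∈ D, μ x * μ x := by rw [Finset.sum_comm]; exact Finset.sum_congr rfl h2
    _ ≤ ∑ x ∈ D, p * μ x :=
        Finset.sum_le_sum fun x hx => mul_le_mul_of_nonneg_right (hp x hx) (hμ x)
    _ = p := by rw [← Finset.mul_sum, hsum, mul_one]

lemma card_collSet_le (G : SimpleGraph V) (r : V → ℝ) :
    ((collSet G r).card : ℝ) ≤ ∑ w, ∑ s ∈ clN G w, ∑ t ∈ (clN G w).erase s,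
      (if r s = r t then 1 else 0) := by
  rw [collSet, Finset.card_filter, Nat.cast_sum]
  refine Finset.sum_le_sum fun w _ => ?_
  have hnn : ∀ s, ∀ t ∈ (clN G w).erase s, (0 : ℝ) ≤ if r s = r t then 1 else 0 := by
    intro s t _
    split_ifs <;> norm_num
  split_ifs with h
  · obtain ⟨s, hs, t, ht, hst, hr⟩ := h
    refine le_trans ?_ (Finset.single_le_sum
      (fun s _ => Finset.sum_nonneg (hnn s)) hs)
    refine le_trans ?_ (Finset.single_le_sum (hnn s) (Finset.mem_erase.2 ⟨hst.symm, ht⟩))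
    simp [hr]
  · rw [Nat.cast_zero]
    exact Finset.sum_nonneg fun s _ => Finset.sum_nonneg (hnn s)

lemma expect_collSet (hμ : ∀ z, 0 ≤ μ z) (hsum : ∑ z ∈ D, μ z = 1) (hp : ∀ z ∈ D, μ z ≤ p)
    (hp0 : 0 ≤ p) (G : SimpleGraph V) {Δ : ℕ} (hdeg : ∀ w : V, (G.neighborSet w).ncard ≤ Δ) :
    ∑ r ∈ Fintype.piFinset (fun _ : V => D), (∏ v, μ (r v)) * (collSet G r).card ≤
      Fintype.card V * ((Δ + 1) * ((Δ + 1) * p)) := by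
  have hc : ∀ w, ((clN G w).card : ℝ) ≤ Δ + 1 := fun w => by exact_mod_cast card_clN hdeg w
  calc _ ≤ ∑ r ∈ Fintype.piFinset (fun _ : V => D), (∏ v, μ (r v)) *
          ∑ w, ∑ s ∈ clN G w, ∑ t ∈ (clN G w).erase s, (if r s = r t then 1 else 0) :=
        Finset.sum_le_sum fun r _ => mul_le_mul_of_nonneg_left (card_collSet_le G r)
          (Finset.prod_nonneg fun v _ => hμ _)
    _ = ∑ w, ∑ s ∈ clN G w, ∑ t ∈ (clN G w).erase s,
          ∑ r ∈ Fintype.piFinset (fun _ : V => D),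
            (∏ v, μ (r v)) * (if r s = r t then 1 else 0) := by
        simp only [Finset.mul_sum]
        rw [Finset.sum_comm]
        refine Finset.sum_congr rfl fun w _ => ?_
        rw [Finset.sum_comm]
        refine Finset.sum_congr rfl fun s _ => ?_
        rw [Finset.sum_comm]
    _ ≤ ∑ w : V, ∑ s ∈ clN G w, ∑ t ∈ (clN G w).erase s, p :=
        Finset.sum_le_sum fun w _ => Finset.sum_le_sum fun s _ => Finset.sum_le_sum fun t ht =>
          prob_pair hμ hsum hp (Finset.mem_erase.1 ht).1.symm
    _ ≤ ∑ w : V, ∑ s ∈ clN G w, ((Δ : ℝ) + 1) * p := by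
        refine Finset.sum_le_sum fun w _ => Finset.sum_le_sum fun s _ => ?_
        rw [Finset.sum_const, nsmul_eq_mul]
        refine mul_le_mul_of_nonneg_right (le_trans ?_ (hc w)) hp0
        exact_mod_cast Finset.card_le_card (Finset.erase_subset _ _)
    _ ≤ ∑ _w : V, ((Δ : ℝ) + 1) * ((Δ + 1) * p) := by
        refine Finset.sum_le_sum fun w _ => ?_
        rw [Finset.sum_const, nsmul_eq_mul]
        exact mul_le_mul_of_nonneg_right (hc w) (by positivity)
    _ = _ := by rw [Finset.sum_const, nsmul_eq_mul, Finset.card_univ]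

/-- Markov's inequality for the number of vertices that see a label collision: an event that holds
as soon as this number is at most `c` has probability at least `1 - δ`. -/
lemma prob_ge (hμ : ∀ z, 0 ≤ μ z) (hsum : ∑ z ∈ D, μ z = 1) (hp : ∀ z ∈ D, μ z ≤ p)
    (hp0 : 0 ≤ p) (G : SimpleGraph V) {Δ : ℕ} (hdeg : ∀ w : V, (G.neighborSet w).ncard ≤ Δ)
    {c δ : ℝ} (hc : 0 < c) (hδ : Fintype.card V * ((Δ + 1) * ((Δ + 1) * p)) ≤ δ * c)
    (P : (V → ℝ) → Prop)
    (hP : ∀ r : V → ℝ, (∀ v, r v ∈ D) → ((collSet G r).card : ℝ) ≤ c → P r) :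
    1 - δ ≤ probOver D μ P := by
  have hw : ∀ r : V → ℝ, 0 ≤ ∏ v, μ (r v) := fun r => Finset.prod_nonneg fun v _ => hμ _
  have hsplit := Finset.sum_filter_add_sum_filter_not
    (Fintype.piFinset (fun _ : V => D)) P (fun r => ∏ v, μ (r v))
  rw [sum_weight hsum] at hsplit
  have hbad : (∑ r ∈ (Fintype.piFinset (fun _ : V => D)).filter (fun r => ¬ P r),
      ∏ v, μ (r v)) * c ≤ δ * c := by
    refine le_trans ?_ ((expect_collSet hμ hsum hp hp0 G hdeg).trans hδ)
    rw [Finset.sum_mul]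
    refine le_trans (Finset.sum_le_sum fun r hr => ?_) (Finset.sum_le_sum_of_subset_of_nonneg
      (Finset.filter_subset (fun r => ¬ P r) _) fun r _ _ => mul_nonneg (hw r) (Nat.cast_nonneg _))
    obtain ⟨hr, hnP⟩ := Finset.mem_filter.1 hr
    refine mul_le_mul_of_nonneg_left (le_of_not_ge fun h => hnP ?_) (hw r)
    exact hP r (Fintype.mem_piFinset.1 hr) h
  have := le_of_mul_le_mul_right hbad hc
  unfold probOver
  linarith

end Probability

/-! ### The output set of the GIN -/

/-- Two vertices with equal labels at distance at most `1` from `v` form a collision in the closed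
neighborhood of `v`, so the vertices added because of repeated labels are already in the greedy
set. -/
lemma rginDomOutput_eq {V : Type} [Fintype V] {Δ B : ℕ} {D : Finset ℝ} {col : ℕ → D}
    {θ : GINParams 2 1} (G : SimpleGraph V) (a : V → D)
    (hθ : ∀ v, 0.5 < GINout θ G (fun u => ![((G.neighborSet u).ncard : ℝ), (a u : ℝ)]) v 0 ↔
      v ∈ greedy G a Δ B col ((Δ + 1) * B)) :
    rginDomOutput θ G 1 (fun v => (a v : ℝ)) = (greedy G a Δ B col ((Δ + 1) * B) : Set V) := by
  ext v
  rw [rginDomOutput, Set.mem_union, Set.mem_ofPred_eq, hθ, Finset.mem_coe, or_iff_left_iff_imp]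
  rintro ⟨s, hs, t, ht, hst, hr⟩
  have hball : ∀ u, u ∈ ballSet G v 1 → u ∈ clN G v := by
    intro u hu
    rw [ballSet, Set.mem_ofPred_eq, Nat.cast_one, SimpleGraph.edist_le_one_iff_adj_or_eq] at hu
    exact mem_clN.2 (hu.symm.imp_left Eq.symm)
  exact greedy_mono (Nat.zero_le _) (mem_collSet.2
    ⟨s, hball s hs, t, hball t ht, hst, Subtype.ext hr⟩)

/-- Fix `Δ ≥ 2`. For all `ε, δ > 0` there exists `p > 0` such that for
every distribution `μ` on a finite set `D ⊂ ℝ` with `μ {z} ≤ p` for all `z ∈ D`, there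
exist a positive integer `L` and GIN parameters `θ` with one-dimensional output such that
for every finite connected simple graph `G` with maximum degree at most `Δ`: sampling
labels i.i.d. from `μ`, running the GIN with input features `h_v = (deg v, r v)` and
setting `U = {v | z_v > 0.5} ∪ {v | ∃ distinct s,t ∈ N_L(v), r s = r t}`, the set `U` is a
dominating set of `G` for every realization of the labels, and with probability at least
`1 − δ` it satisfies `|U| ≤ (H(Δ+1) + ε) · γ(G)`. -/
theorem stmt_15 (Δ : ℕ) (hΔ : 2 ≤ Δ) (ε δ : ℝ) (hε : 0 < ε) (hδ : 0 < δ) :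
    ∃ p : ℝ, 0 < p ∧
      ∀ (D : Finset ℝ) (μ : ℝ → ℝ),
        (∀ z, 0 ≤ μ z) → (∑ z ∈ D, μ z = 1) → (∀ z ∈ D, μ z ≤ p) →
      ∃ (L : ℕ), 0 < L ∧ ∃ θ : GINParams 2 1,
        ∀ (V : Type) [Fintype V] (G : SimpleGraph V),
          G.Connected → (∀ w : V, (G.neighborSet w).ncard ≤ Δ) →
          (∀ r : V → ℝ, (∀ v, r v ∈ D) → IsDomSet G (rginDomOutput θ G L r)) ∧
          1 - δ ≤ probOver D μ (fun r : V → ℝ =>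
            ((rginDomOutput θ G L r).ncard : ℝ) ≤
              ((∑ i ∈ Finset.range (Δ + 1), (1 : ℝ) / (i + 1)) + ε) *
                dominationNumber G) := by
  -- This value of `p` makes the expected number of vertices seeing a label collision, which is at
  -- most `n (Δ + 1)² p`, bounded by `δ ε γ(G)`, since `n ≤ (Δ + 1) γ(G)`.
  have hΔ0 : (0 : ℝ) < Δ + 1 := by positivity
  refine ⟨ε * δ / (Δ + 1) ^ 3, by positivity, fun D μ hμ hsum hp => ?_⟩
  have hDne : D.Nonempty := by
    by_contra h
    rw [Finset.not_nonempty_iff_eq_empty] at h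
    simp [h] at hsum
  obtain ⟨x0, hx0⟩ := hDne
  -- The schedule runs through all the labels in each of the `Δ + 1` phases.
  obtain ⟨B, col, hcol⟩ : ∃ (B : ℕ) (col : ℕ → D), ∀ x, ∃ i < B, col i = x := by
    refine ⟨Fintype.card D, fun i => if h : i < Fintype.card D
      then (Fintype.equivFin D).symm ⟨i, h⟩ else ⟨x0, hx0⟩, fun x =>
      ⟨Fintype.equivFin D x, Fin.is_lt _, ?_⟩⟩
    exact (dif_pos (Fin.is_lt _)).trans (by simp)
  obtain ⟨θ, hθ⟩ := exists_gin Δ D (fun x => (x, false, false)) (gUpd Δ B col)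
    (fun q => q.2.1 = true) (2 * ((Δ + 1) * B) + 1)
  refine ⟨1, one_pos, θ, fun V _ G hconn hdeg => ?_⟩
  have hout : ∀ a : V → D, rginDomOutput θ G 1 (fun v => (a v : ℝ)) =
      (greedy G a Δ B col ((Δ + 1) * B) : Set V) := fun a => by
    refine rginDomOutput_eq G a fun v => ?_
    rw [hθ V G a hdeg v, mpState_greedy]
    simp
  refine ⟨fun r hr => ?_, ?_⟩
  · have := hout (fun v => ⟨r v, hr v⟩)
    rw [this]
    exact greedy_dom hdeg hcol
  · have hne : Nonempty V := hconn.nonempty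
    have hn : (Fintype.card V : ℝ) ≤ dominationNumber G * (Δ + 1) := by
      exact_mod_cast card_le_dominationNumber hdeg
    have hγ : (0 : ℝ) < dominationNumber G := by
      have h1 : (0 : ℝ) < Fintype.card V := by exact_mod_cast Fintype.card_pos
      exact pos_of_mul_pos_left (h1.trans_le hn) hΔ0.le
    refine prob_ge hμ hsum hp (by positivity) G hdeg (c := ε * dominationNumber G)
      (by positivity) ?_ _ fun r hr hcoll => ?_
    · calc (Fintype.card V : ℝ) * ((Δ + 1) * ((Δ + 1) * (ε * δ / (Δ + 1) ^ 3)))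
          ≤ dominationNumber G * (Δ + 1) * ((Δ + 1) * ((Δ + 1) * (ε * δ / (Δ + 1) ^ 3))) :=
            mul_le_mul_of_nonneg_right hn (by positivity)
        _ = δ * (ε * dominationNumber G) := by
            field_simp
    · have h1 := hout (fun v => ⟨r v, hr v⟩)
      have h2 := greedy_card (G := G) (a := fun v => (⟨r v, hr v⟩ : D)) hdeg hcol
      have h3 : collSet G (fun v => (⟨r v, hr v⟩ : D)) = collSet G r := by
        ext w
        simp [mem_collSet]
      change rginDomOutput θ G 1 r = _ at h1
      rw [h3] at h2
      rw [h1, Set.ncard_coe_finset]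
      change _ ≤ (harm (Δ + 1) + ε) * _
      rw [add_mul (harm _)]
      linarith
end
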